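/- arXiv:1501.05753 — 2 statements merged into one kernel-verified Lean document; each statement's English description precedes it below -/
import Mathlib

section
/- Let Γ be a countable sofic group and a ∈ M_n(ℚ̄Γ). Then the von Neumann dimension dim_{τ_Γ}(ker j(a)) of the kernel of j(a), computed with respect to the canonical trace τ_Γ of Γ, is the same for all field embeddings j : ℚ̄ → ℂ. -/
open scoped ComplexOrder ENNReal
open Filter Topology Matrix

set_option synthInstance.maxHeartbeats 1000000
set_option maxHeartbeats 1000000

noncomputable section

instance piLpCompleteSpace {ι : Type*} [Fintype ι] (p : ℝ≥0∞) (β : ι → Type*)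
    [∀ i, UniformSpace (β i)] [∀ i, CompleteSpace (β i)] : CompleteSpace (PiLp p β) :=
  PiLp.completeSpace p β

/-- `φ : G → ℂ` is of positive type: for every finite family `g₁, …, g_m` of elements of
`G`, the matrix `(φ (gᵢ⁻¹ gⱼ))_{i,j}` is positive semidefinite. -/
def IsPosType {G : Type*} [Group G] (φ : G → ℂ) : Prop :=
  ∀ (m : ℕ) (g : Fin m → G), (Matrix.of fun i j => φ ((g i)⁻¹ * g j)).PosSemidef

/-- A trace on a (discrete) group: a function of positive type, constant on conjugacy
classes. -/
def IsGroupTrace {G : Type*} [Group G] (φ : G → ℂ) : Prop :=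
  IsPosType φ ∧ ∀ g h : G, φ (h * g * h⁻¹) = φ g

/-- GNS representation data for a function `φ` on a group `G`: a Hilbert space `H`, a
unital algebra morphism `π` from `ℂG = MonoidAlgebra ℂ G` to the bounded operators on `H`
sending group elements to unitaries (this is the condition `star_of`), and a cyclic vector
`ξ` whose matrix coefficient is (the linear extension of) `φ`. -/
structure GNSRep (G : Type*) [Group G] (φ : G → ℂ) where
  H : Type
  [instNormed : NormedAddCommGroup H]
  [instInner : InnerProductSpace ℂ H]
  [instComplete : CompleteSpace H]
  π : MonoidAlgebra ℂ G →ₐ[ℂ] (H →L[ℂ] H)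
  ξ : H
  star_of : ∀ g : G, star (π (MonoidAlgebra.of ℂ G g)) = π (MonoidAlgebra.of ℂ G g⁻¹)
  inner_eq : ∀ g : G, (inner ℂ ξ (π (MonoidAlgebra.of ℂ G g) ξ) : ℂ) = φ g
  cyclic : Dense (Set.range fun x : MonoidAlgebra ℂ G => π x ξ)

attribute [instance] GNSRep.instNormed GNSRep.instInner GNSRep.instComplete

/-- The vector `ξᵢ ∈ Hⁿ`: the cyclic vector `ξ` in the `i`-th summand, `0` elsewhere. -/
def GNSRep.vec {G : Type*} [Group G] {φ : G → ℂ} (R : GNSRep G φ) {n : ℕ} (i : Fin n) :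
    PiLp 2 (fun _ : Fin n => R.H) :=
  (PiLp.continuousLinearEquiv 2 ℂ (fun _ : Fin n => R.H)).symm (Pi.single i R.ξ)

/-- `|x| = (x* x)^{1/2}`, via the continuous functional calculus. -/
def cfcAbs {A : Type*} [CStarAlgebra A] (x : A) : A := cfc Real.sqrt (star x * x)

/-- The set of continuous majorants of `ln₊` on `[0,∞)`.  (Recall that `Real.log 0 = 0`,
so that `Real.log` agrees with `ln₊` on `[0,∞)`.) -/
def lnPlusMajorants : Set (ℝ → ℝ) :=
  {g | ContinuousOn g (Set.Ici 0) ∧ ∀ t ∈ Set.Ici (0:ℝ), Real.log t ≤ g t}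

/-- The action of a matrix `a ∈ Mₙ(R)` on the Hilbert space `H'ⁿ` (with its `ℓ²` inner
product) induced by a morphism `π : R → B(H')`: `(π_n(a) v)_i = Σ_j π(a i j) (v j)`. -/
def matAct {R H' : Type*} [Ring R] [Algebra ℂ R] [NormedAddCommGroup H']
    [InnerProductSpace ℂ H'] {n : ℕ}
    (π : R →ₐ[ℂ] (H' →L[ℂ] H')) (a : Matrix (Fin n) (Fin n) R) :
    PiLp 2 (fun _ : Fin n => H') →L[ℂ] PiLp 2 (fun _ : Fin n => H') :=
  (PiLp.continuousLinearEquiv 2 ℂ _).symm.toContinuousLinearMap ∘L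
    (ContinuousLinearMap.pi fun i => ∑ j, (π (a i j)).comp (ContinuousLinearMap.proj j)) ∘L
    (PiLp.continuousLinearEquiv 2 ℂ _).toContinuousLinearMap

/-- `(φ ⊗ Trₙ)(ln₊ |a|) := inf { Σᵢ ⟨ξᵢ, g(|π(a)|) ξᵢ⟩ : g : [0,∞) → ℝ continuous, g ≥ ln₊ }`,
an element of `ℝ ∪ {−∞}`, computed in the GNS representation `R`. -/
def GNSRep.lnPlusQ {G : Type*} [Group G] {φ : G → ℂ} (R : GNSRep G φ) {n : ℕ}
    (a : Matrix (Fin n) (Fin n) (MonoidAlgebra ℂ G)) : EReal :=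
  ⨅ g ∈ lnPlusMajorants,
    ((∑ i, (inner ℂ (R.vec i) (cfc g (cfcAbs (matAct R.π a)) (R.vec i)) : ℂ)).re : EReal)

/-- A function `φ` on `G` satisfies Lück's condition if `(φ ⊗ Trₙ)(ln₊|a|) ≥ 0` for every
`n ≥ 1` and every `a ∈ Mₙ(ℤG)` (an `a ∈ Mₙ(ℂG)` whose coefficients are all integers),
where the quantity is computed in any GNS representation of `φ`. -/
def SatisfiesLueck {G : Type*} [Group G] (φ : G → ℂ) : Prop :=
  ∀ (n : ℕ), 0 < n → ∀ a : Matrix (Fin n) (Fin n) (MonoidAlgebra ℂ G),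
    (∀ (i j : Fin n) (g : G), ∃ m : ℤ, (a i j).coeff g = (m : ℂ)) →
    ∀ R : GNSRep G φ, 0 ≤ R.lnPlusQ a

/-- `dim_φ(ker a) := inf { Σᵢ ⟨ξᵢ, h(|π(a)|) ξᵢ⟩ : h : [0,∞) → [0,1] continuous, h 0 = 1 }`,
the von Neumann dimension of the kernel of `a`, computed in the GNS representation `R`. -/
def GNSRep.kerDim {G : Type*} [Group G] {φ : G → ℂ} (R : GNSRep G φ) {n : ℕ}
    (a : Matrix (Fin n) (Fin n) (MonoidAlgebra ℂ G)) : ℝ :=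
  sInf {r : ℝ | ∃ h : ℝ → ℝ, ContinuousOn h (Set.Ici 0) ∧
    (∀ t ∈ Set.Ici (0:ℝ), h t ∈ Set.Icc (0:ℝ) 1) ∧ h 0 = 1 ∧
    r = (∑ i, (inner ℂ (R.vec i) (cfc h (cfcAbs (matAct R.π a)) (R.vec i)) : ℂ)).re}

/-- `τ_k(σ) = card {x | σ x = x} / k`, the fixed-point ratio of a permutation. -/
def permFixRatio {k : ℕ} (σ : Equiv.Perm (Fin k)) : ℝ :=
  (Finset.univ.filter fun x => σ x = x).card / k

/-- `δ_k(σ₁, σ₂) = card {x | σ₁ x ≠ σ₂ x} / k`, the normalized Hamming distance. -/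
def permHamming {k : ℕ} (σ₁ σ₂ : Equiv.Perm (Fin k)) : ℝ :=
  (Finset.univ.filter fun x => σ₁ x ≠ σ₂ x).card / k

/-- A group `Γ` is sofic: there are maps `f_n : Γ → S_{k_n}` (not necessarily
homomorphisms) which are asymptotically multiplicative and asymptotically free. -/
def IsSofic (Γ : Type*) [Group Γ] : Prop :=
  ∃ (k : ℕ → ℕ) (f : ∀ n, Γ → Equiv.Perm (Fin (k n))),
    (∀ n, 0 < k n) ∧
    (∀ x y : Γ, Tendsto (fun n => permHamming (f n x * f n y) (f n (x * y))) atTop (𝓝 0)) ∧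
    (∀ x : Γ, x ≠ 1 → Tendsto (fun n => permHamming (f n x) 1) atTop (𝓝 1))

open Classical in
/-- The canonical trace on a group: `τ_Γ(x) = 1` if `x = 1` and `0` otherwise. -/
def canonicalTrace (Γ : Type*) [Group Γ] : Γ → ℂ := fun x => if x = 1 then 1 else 0

/-- Apply a field embedding `j : ℚ̄ → ℂ` coefficientwise to a matrix over the group ring
`ℚ̄G`, where `ℚ̄ = AlgebraicClosure ℚ` is the field of algebraic numbers. -/
def mapCoeffs {n : ℕ} {G : Type*} [Group G] (j : AlgebraicClosure ℚ →+* ℂ)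
    (a : Matrix (Fin n) (Fin n) (MonoidAlgebra (AlgebraicClosure ℚ) G)) :
    Matrix (Fin n) (Fin n) (MonoidAlgebra ℂ G) :=
  fun i i' => MonoidAlgebra.ofCoeff (Finsupp.mapRange j j.map_zero (a i i').coeff)

namespace LA

variable {Γ : Type*} [Group Γ]

lemma matAct_apply {R H' : Type*} [Ring R] [Algebra ℂ R] [NormedAddCommGroup H']
    [InnerProductSpace ℂ H'] {n : ℕ}
    (π : R →ₐ[ℂ] (H' →L[ℂ] H')) (a : Matrix (Fin n) (Fin n) R)
    (v : PiLp 2 (fun _ : Fin n => H')) (i : Fin n) :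
    (matAct π a v) i = ∑ j, π (a i j) (v j) := by
  simp [matAct]

lemma matAct_mul {R H' : Type*} [Ring R] [Algebra ℂ R] [NormedAddCommGroup H']
    [InnerProductSpace ℂ H'] {n : ℕ}
    (π : R →ₐ[ℂ] (H' →L[ℂ] H')) (a b : Matrix (Fin n) (Fin n) R) :
    matAct π (a * b) = matAct π a * matAct π b := by
  ext v i
  simp only [mul_apply_eq_comp, matAct_apply, Matrix.mul_apply, map_sum, map_mul,
    _root_.sum_apply]
  rw [Finset.sum_comm]

lemma matAct_one {R H' : Type*} [Ring R] [Algebra ℂ R] [NormedAddCommGroup H']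
    [InnerProductSpace ℂ H'] {n : ℕ}
    (π : R →ₐ[ℂ] (H' →L[ℂ] H')) :
    matAct π (1 : Matrix (Fin n) (Fin n) R) = 1 := by
  ext v i
  simp only [one_apply_eq_self, matAct_apply, Matrix.one_apply]
  rw [Finset.sum_eq_single i]
  · simp
  · intro j _ hj
    simp [Ne.symm hj]
  · simp

lemma matAct_pow {R H' : Type*} [Ring R] [Algebra ℂ R] [NormedAddCommGroup H']
    [InnerProductSpace ℂ H'] {n : ℕ}
    (π : R →ₐ[ℂ] (H' →L[ℂ] H')) (a : Matrix (Fin n) (Fin n) R) (l : ℕ) :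
    matAct π (a ^ l) = matAct π a ^ l := by
  induction l with
  | zero => simp [matAct_one]
  | succ l ih => rw [pow_succ, pow_succ, matAct_mul, ih]

lemma matAct_smul {R H' : Type*} [Ring R] [Algebra ℂ R] [NormedAddCommGroup H']
    [InnerProductSpace ℂ H'] {n : ℕ}
    (π : R →ₐ[ℂ] (H' →L[ℂ] H')) (c : ℂ) (a : Matrix (Fin n) (Fin n) R) :
    matAct π (c • a) = c • matAct π a := by
  ext v i
  simp only [matAct_apply, Matrix.smul_apply, map_smul, _root_.smul_apply,
    PiLp.smul_apply, Finset.smul_sum]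

lemma cfc_smul_star {A : Type*} [CStarAlgebra A] [PartialOrder A] [StarOrderedRing A]
    (x : A) (c : ℝ) (h : ℝ → ℝ)
    (hcont : ContinuousOn h (Set.Ici 0)) :
    cfc h (star ((c : ℂ) • x) * ((c : ℂ) • x)) =
      cfc (fun t => h ((c ^ 2 : ℝ) • t)) (star x * x) := by
  have key : star ((c : ℂ) • x) * ((c : ℂ) • x) = (c ^ 2 : ℝ) • (star x * x) := by
    rw [star_smul, smul_mul_smul_comm, ← Complex.coe_smul]
    simp [pow_two]
  rw [key, cfc_comp_smul (c ^ 2 : ℝ) h _ (hcont.mono ?_) (IsSelfAdjoint.star_mul_self _)]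
  rintro _ ⟨t, ht, rfl⟩
  exact mul_nonneg (sq_nonneg c) (spectrum_nonneg_of_nonneg (star_mul_self_nonneg x) ht)

lemma star_matAct {R H' : Type*} [Ring R] [Algebra ℂ R] [NormedAddCommGroup H']
    [InnerProductSpace ℂ H'] [CompleteSpace H'] {n : ℕ}
    (π : R →ₐ[ℂ] (H' →L[ℂ] H')) (a a' : Matrix (Fin n) (Fin n) R)
    (h : ∀ i j, π (a' i j) = star (π (a j i))) :
    star (matAct π a) = matAct π a' := by
  rw [ContinuousLinearMap.star_eq_adjoint]
  symm
  rw [ContinuousLinearMap.eq_adjoint_iff]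
  intro x y
  simp only [PiLp.inner_apply, matAct_apply, sum_inner, inner_sum, h,
    ContinuousLinearMap.star_eq_adjoint, ContinuousLinearMap.adjoint_inner_left]
  rw [Finset.sum_comm]

variable (R : GNSRep Γ (canonicalTrace Γ))

lemma inner_pi (x : MonoidAlgebra ℂ Γ) : inner ℂ R.ξ (R.π x R.ξ) = x.coeff 1 := by
  induction x using MonoidAlgebra.induction_on with
  | of g =>
    rw [R.inner_eq]
    classical
    simp only [canonicalTrace, MonoidAlgebra.of_apply, MonoidAlgebra.coeff_single,
      Finsupp.single_apply]
  | add x y hx hy => simp [inner_add_right, hx, hy]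
  | smul r x hx => simp [inner_smul_right, hx]

lemma vec_apply {n : ℕ} (i j : Fin n) : (R.vec i) j = if j = i then R.ξ else 0 := by
  simp [GNSRep.vec, Pi.single_apply]

/-- the (real part of the) trace-like functional -/
def tau {n : ℕ} (S : PiLp 2 (fun _ : Fin n => R.H) →L[ℂ] PiLp 2 (fun _ : Fin n => R.H)) : ℝ :=
  (∑ i, (inner ℂ (R.vec i) (S (R.vec i)) : ℂ)).re

lemma tau_matAct {n : ℕ} (c : Matrix (Fin n) (Fin n) (MonoidAlgebra ℂ Γ)) :
    tau R (matAct R.π c) = (∑ i, (c i i).coeff 1).re := by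
  unfold tau
  congr 1
  refine Finset.sum_congr rfl fun i _ => ?_
  rw [PiLp.inner_apply, Finset.sum_eq_single i]
  · rw [matAct_apply, Finset.sum_eq_single i]
    · simp [vec_apply, inner_pi]
    · intro j _ hj
      simp [vec_apply, hj]
    · simp
  · intro j _ hj
    simp [vec_apply, hj]
  · simp

lemma norm_vec {n : ℕ} (i : Fin n) : ‖R.vec i‖ = 1 := by
  have h : inner ℂ (R.vec i) (R.vec i) = (1 : ℂ) := by
    rw [PiLp.inner_apply, Finset.sum_eq_single i]
    · have := inner_pi R 1
      simp only [map_one, one_apply_eq_self] at this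
      simp only [vec_apply, if_true, this]
      simp [MonoidAlgebra.one_def]
    · intro j _ hj
      simp [vec_apply, hj]
    · simp
  rw [inner_self_eq_norm_sq_to_K] at h
  have h2 : ‖R.vec i‖ ^ 2 = 1 := by
    have h3 : ((‖R.vec i‖ ^ 2 : ℝ) : ℂ) = 1 := by simpa using h
    exact_mod_cast h3
  have := norm_nonneg (R.vec i)
  nlinarith

lemma tau_add {n : ℕ} (S T : PiLp 2 (fun _ : Fin n => R.H) →L[ℂ] PiLp 2 (fun _ : Fin n => R.H)) :
    tau R (S + T) = tau R S + tau R T := by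
  simp [tau, inner_add_right, Finset.sum_add_distrib]

lemma tau_sub {n : ℕ} (S T : PiLp 2 (fun _ : Fin n => R.H) →L[ℂ] PiLp 2 (fun _ : Fin n => R.H)) :
    tau R (S - T) = tau R S - tau R T := by
  simp [tau, inner_sub_right, Finset.sum_sub_distrib]

lemma tau_smul {n : ℕ} (c : ℝ)
    (S : PiLp 2 (fun _ : Fin n => R.H) →L[ℂ] PiLp 2 (fun _ : Fin n => R.H)) :
    tau R (c • S) = c * tau R S := by
  unfold tau
  have : ∀ i, inner ℂ (R.vec i) ((c • S) (R.vec i)) = (c : ℂ) * inner ℂ (R.vec i) (S (R.vec i)) := by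
    intro i
    rw [_root_.smul_apply, ← inner_smul_right]
    simp
  simp_rw [this]
  rw [← Finset.mul_sum, Complex.re_ofReal_mul]

lemma abs_tau_le {n : ℕ} (S : PiLp 2 (fun _ : Fin n => R.H) →L[ℂ] PiLp 2 (fun _ : Fin n => R.H)) :
    |tau R S| ≤ n * ‖S‖ := by
  unfold tau
  refine (Complex.abs_re_le_norm _).trans ((norm_sum_le _ _).trans ?_)
  have : ∀ i ∈ (Finset.univ : Finset (Fin n)), ‖inner ℂ (R.vec i) (S (R.vec i))‖ ≤ ‖S‖ := by
    intro i _
    refine (norm_inner_le_norm _ _).trans ?_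
    have := S.le_opNorm (R.vec i)
    rw [norm_vec] at *
    linarith
  refine (Finset.sum_le_card_nsmul _ _ _ this).trans ?_
  simp

/-- polynomial calculus under `tau` -/
lemma tau_aeval {n : ℕ} (T : PiLp 2 (fun _ : Fin n => R.H) →L[ℂ] PiLp 2 (fun _ : Fin n => R.H))
    (p : Polynomial ℝ) :
    tau R (Polynomial.aeval T p) = p.sum fun l c => c * tau R (T ^ l) := by
  rw [Polynomial.aeval_eq_sum_range, Polynomial.sum_over_range]
  · induction (p.natDegree + 1) with
    | zero => simp [tau]
    | succ m ih => rw [Finset.sum_range_succ, Finset.sum_range_succ, tau_add, ih, tau_smul]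
  · simp

lemma star_mul_self_nonneg' {n : ℕ}
    (x : PiLp 2 (fun _ : Fin n => R.H) →L[ℂ] PiLp 2 (fun _ : Fin n => R.H)) :
    ∀ t ∈ spectrum ℝ (star x * x), 0 ≤ t := by
  intro t ht
  exact spectrum_nonneg_of_nonneg (star_mul_self_nonneg x) ht

lemma cfc_cfcAbs {n : ℕ}
    (x : PiLp 2 (fun _ : Fin n => R.H) →L[ℂ] PiLp 2 (fun _ : Fin n => R.H)) (h : ℝ → ℝ)
    (hh : ContinuousOn h (Set.Ici 0)) :
    cfc h (cfcAbs x) = cfc (fun t => h (Real.sqrt t)) (star x * x) := by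
  unfold cfcAbs
  rw [← cfc_comp h Real.sqrt (star x * x) (IsSelfAdjoint.star_mul_self x)
    (hh.mono ?_) Real.continuous_sqrt.continuousOn]
  · rfl
  · rintro _ ⟨t, _, rfl⟩
    exact Real.sqrt_nonneg t

/-- `kerDim` in terms of `x* x`. -/
lemma kerDim_eq {n : ℕ} (a : Matrix (Fin n) (Fin n) (MonoidAlgebra ℂ Γ)) :
    R.kerDim a = sInf {r : ℝ | ∃ h : ℝ → ℝ, ContinuousOn h (Set.Ici 0) ∧
      (∀ t ∈ Set.Ici (0:ℝ), h t ∈ Set.Icc (0:ℝ) 1) ∧ h 0 = 1 ∧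
      r = tau R (cfc h (star (matAct R.π a) * matAct R.π a))} := by
  unfold GNSRep.kerDim
  congr 1
  ext r
  constructor
  · rintro ⟨h, hc, h01, h0, rfl⟩
    refine ⟨fun t => h (Real.sqrt t), ?_, fun t _ => h01 _ (Real.sqrt_nonneg t), by simpa using h0, ?_⟩
    · exact hc.comp Real.continuous_sqrt.continuousOn (fun t _ => Real.sqrt_nonneg t)
    · rw [cfc_cfcAbs R _ _ hc]; rfl
  · rintro ⟨h, hc, h01, h0, rfl⟩
    have hc' : ContinuousOn (fun t => h (t ^ 2)) (Set.Ici 0) :=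
      hc.comp (by fun_prop) (fun t _ => sq_nonneg t)
    refine ⟨fun t => h (t ^ 2), hc', fun t _ => h01 _ (sq_nonneg t), by simpa using h0, ?_⟩
    rw [cfc_cfcAbs R _ _ hc']
    unfold tau
    congr 1
    refine Finset.sum_congr rfl fun i _ => ?_
    congr 2
    refine cfc_congr fun t ht => ?_
    change h t = h ((Real.sqrt t) ^ 2)
    rw [Real.sq_sqrt (star_mul_self_nonneg' R _ t ht)]

lemma kerDim_smul_aux {n : ℕ} (a : Matrix (Fin n) (Fin n) (MonoidAlgebra ℂ Γ)) (c : ℝ) (hc : 0 < c) :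
    {r : ℝ | ∃ h : ℝ → ℝ, ContinuousOn h (Set.Ici 0) ∧
      (∀ t ∈ Set.Ici (0:ℝ), h t ∈ Set.Icc (0:ℝ) 1) ∧ h 0 = 1 ∧
      r = tau R (cfc h (star (matAct R.π ((c : ℂ) • a)) * matAct R.π ((c : ℂ) • a)))} ⊆
    {r : ℝ | ∃ h : ℝ → ℝ, ContinuousOn h (Set.Ici 0) ∧
      (∀ t ∈ Set.Ici (0:ℝ), h t ∈ Set.Icc (0:ℝ) 1) ∧ h 0 = 1 ∧
      r = tau R (cfc h (star (matAct R.π a) * matAct R.π a))} := by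
  rintro r ⟨h, hcont, h01, h0, rfl⟩
  refine ⟨fun t => h ((c ^ 2 : ℝ) • t), ?_, fun t ht => h01 _ ?_, by simpa using h0, ?_⟩
  · refine hcont.comp (by fun_prop) fun t ht => ?_
    exact mul_nonneg (sq_nonneg c) ht
  · exact mul_nonneg (sq_nonneg c) ht
  · rw [matAct_smul, cfc_smul_star _ _ _ hcont]

lemma kerDim_smul {n : ℕ} (a : Matrix (Fin n) (Fin n) (MonoidAlgebra ℂ Γ)) (c : ℝ) (hc : 0 < c) :
    R.kerDim ((c : ℂ) • a) = R.kerDim a := by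
  rw [kerDim_eq, kerDim_eq]
  congr 1
  refine subset_antisymm (kerDim_smul_aux R a c hc) ?_
  have := kerDim_smul_aux R ((c : ℂ) • a) c⁻¹ (inv_pos.2 hc)
  rw [smul_smul] at this
  have hc' : ((c⁻¹ : ℝ) : ℂ) * (c : ℂ) = 1 := by
    rw [← Complex.ofReal_mul, inv_mul_cancel₀ hc.ne']; simp
  rwa [hc', one_smul] at this

end LA

namespace LA

lemma rank_map_field {K L : Type*} [Field K] [Field L] (j : K →+* L) {ι : Type*} [Fintype ι]
    [DecidableEq ι] (A : Matrix ι ι K) : (A.map j).rank = A.rank := by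
  obtain ⟨P, Q, D, h⟩ := Matrix.Pivot.exists_list_transvec_mul_mul_list_transvec_eq_diagonal A
  set p := (P.map TransvectionStruct.toMatrix).prod with hp
  set q := (Q.map TransvectionStruct.toMatrix).prod with hq
  have dp : p.det = 1 := by simp [hp]
  have dq : q.det = 1 := by simp [hq]
  have h1 : A.rank = (diagonal D).rank := by
    rw [← h, rank_mul_eq_left_of_isUnit_det _ _ (by simp [dq]),
      rank_mul_eq_right_of_isUnit_det _ _ (by simp [dp])]
  have h2 : (p.map j) * (A.map j) * (q.map j) = diagonal (fun i => j (D i)) := by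
    rw [← Matrix.map_mul, ← Matrix.map_mul, h, Matrix.diagonal_map (map_zero j)]
  have dp' : (p.map j).det = 1 := by
    have := RingHom.map_det j p
    rw [dp, map_one] at this
    simpa using this.symm
  have dq' : (q.map j).det = 1 := by
    have := RingHom.map_det j q
    rw [dq, map_one] at this
    simpa using this.symm
  have h3 : (A.map j).rank = (diagonal (fun i => j (D i))).rank := by
    rw [← h2, rank_mul_eq_left_of_isUnit_det _ _ (by simp [dq']),
      rank_mul_eq_right_of_isUnit_det _ _ (by simp [dp'])]
  rw [h1, h3]
  classical
  rw [rank_diagonal, rank_diagonal]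
  simp

lemma root_charpoly_le {ι : Type*} [Fintype ι] [DecidableEq ι] (B : Matrix ι ι ℂ) (M : ℝ)
    (hM : ∀ i, ∑ j, ‖B i j‖ ≤ M) (z : ℂ) (hz : z ∈ B.charpoly.roots) : ‖z‖ ≤ M := by
  have hz' := (Polynomial.mem_roots'.1 hz).2
  rw [← Matrix.mem_spectrum_iff_isRoot_charpoly] at hz'
  have hz2 : Module.End.HasEigenvalue (Matrix.toLin' B) z := by
    rw [Module.End.hasEigenvalue_iff_mem_spectrum, Matrix.spectrum_toLin']
    exact hz'
  obtain ⟨v, hv⟩ := hz2.exists_hasEigenvector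
  have hv1 : B *ᵥ v = z • v := by simpa using hv.apply_eq_smul
  have hv0 : v ≠ 0 := hv.2
  have hne : Nonempty ι := by
    by_contra h
    rw [not_nonempty_iff] at h
    exact hv0 (Subsingleton.elim _ _)
  obtain ⟨i, hi⟩ := Finite.exists_max (fun i => ‖v i‖)
  have hpos : 0 < ‖v i‖ := by
    obtain ⟨l, hl⟩ := Function.ne_iff.1 hv0
    exact (norm_pos_iff.2 hl).trans_le (hi l)
  have h1 : z * v i = ∑ j, B i j * v j := by
    have := congrFun hv1 i
    simpa [Matrix.mulVec, dotProduct] using this.symm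
  have h2 : ‖z‖ * ‖v i‖ ≤ M * ‖v i‖ := by
    rw [← norm_mul, h1]
    refine (norm_sum_le _ _).trans ?_
    calc ∑ j, ‖B i j * v j‖ ≤ ∑ j, ‖B i j‖ * ‖v i‖ := by
          refine Finset.sum_le_sum fun j _ => ?_
          rw [norm_mul]
          exact mul_le_mul_of_nonneg_left (hi j) (norm_nonneg _)
      _ = (∑ j, ‖B i j‖) * ‖v i‖ := by rw [Finset.sum_mul]
      _ ≤ M * ‖v i‖ := mul_le_mul_of_nonneg_right (hM i) hpos.le
  exact le_of_mul_le_mul_right h2 hpos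

lemma eigenvalue_le {ι : Type*} [Fintype ι] [DecidableEq ι] (B : Matrix ι ι ℂ) (hB : B.IsHermitian)
    (M : ℝ) (hM : ∀ i, ∑ j, ‖B i j‖ ≤ M) (i : ι) : |hB.eigenvalues i| ≤ M := by
  have := root_charpoly_le B M hM (hB.eigenvalues i) (by
    rw [Polynomial.mem_roots (Matrix.charpoly_monic B).ne_zero, hB.charpoly_eq,
      Polynomial.IsRoot, Polynomial.eval_prod]
    exact Finset.prod_eq_zero (Finset.mem_univ i) (by simp))
  simpa using this

lemma coeff_charpoly_le {ι : Type*} [Fintype ι] [DecidableEq ι] (B : Matrix ι ι ℂ) (M : ℝ)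
    (h1 : 1 ≤ M) (hM : ∀ i, ∑ j, ‖B i j‖ ≤ M) (l : ℕ) :
    ‖B.charpoly.coeff l‖ ≤ (2 * M) ^ Fintype.card ι := by
  have := Polynomial.coeff_bdd_of_roots_le (B := M) (d := Fintype.card ι) (RingHom.id ℂ)
    (Matrix.charpoly_monic B) (IsAlgClosed.splits _) (Matrix.charpoly_natDegree_eq_dim B).le
    (by
      intro z hz
      rw [Polynomial.map_id] at hz
      exact root_charpoly_le B M hM z hz) l
  rw [Polynomial.map_id, max_eq_left h1] at this
  refine this.trans ?_
  rw [mul_pow, mul_comm]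
  refine mul_le_mul_of_nonneg_right ?_ (by positivity)
  exact_mod_cast Nat.choose_le_two_pow _ _

lemma prod_le_pow_card_real {ι : Type*} (s : Finset ι) (f : ι → ℝ) (c : ℝ) (h0 : ∀ i ∈ s, 0 ≤ f i)
    (h : ∀ i ∈ s, f i ≤ c) : ∏ i ∈ s, f i ≤ c ^ s.card := by
  rw [← Finset.prod_const]
  exact Finset.prod_le_prod h0 h

lemma norm_ge_of_integral {E : Type*} [Field E] [NumberField E] (J : E →+* ℂ) (β : E)
    (hIntg : IsIntegral ℤ β) (h0 : β ≠ 0) (Q : ℝ) (hQ : 1 ≤ Q) (hb : ∀ σ : E →+* ℂ, ‖σ β‖ ≤ Q) :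
    1 ≤ ‖J β‖ * Q ^ Module.finrank ℚ E := by
  have hn : 1 ≤ ‖algebraMap ℚ ℂ (Algebra.norm ℚ β)‖ := by
    have hi : IsIntegral ℤ (Algebra.norm ℚ β) := Algebra.isIntegral_norm ℚ hIntg
    obtain ⟨y, hy⟩ := IsIntegrallyClosed.isIntegral_iff.1 hi
    have hy0 : y ≠ 0 := by
      rintro rfl
      rw [map_zero] at hy
      exact h0 (Algebra.norm_eq_zero_iff.1 hy.symm)
    rw [← hy]
    simp only [algebraMap_int_eq, eq_intCast, map_intCast, Complex.norm_intCast]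
    exact_mod_cast Int.one_le_abs hy0
  rw [Algebra.norm_eq_prod_embeddings ℚ ℂ β, norm_prod] at hn
  refine hn.trans ?_
  classical
  let J' : E →ₐ[ℚ] ℂ := J.toRatAlgHom
  rw [← Finset.mul_prod_erase Finset.univ _ (Finset.mem_univ J')]
  refine mul_le_mul_of_nonneg_left ?_ (norm_nonneg _)
  refine (prod_le_pow_card_real _ (fun σ : E →ₐ[ℚ] ℂ => ‖σ β‖) Q (fun _ _ => norm_nonneg _) (fun σ _ => hb (σ : E →+* ℂ))).trans ?_
  refine pow_le_pow_right₀ hQ ?_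
  refine (Finset.card_le_univ _).trans ?_
  rw [AlgHom.card ℚ E ℂ]

lemma prod_eigenvalues_ge {E : Type*} [Field E] [NumberField E] (J : E →+* ℂ)
    {ι : Type*} [Fintype ι] [DecidableEq ι] (B : Matrix ι ι E) (hB : (B.map J).IsHermitian)
    (hIntg : ∀ i j, IsIntegral ℤ (B i j)) (M : ℝ) (h1 : 1 ≤ M)
    (hM : ∀ σ : E →+* ℂ, ∀ i, ∑ j, ‖σ (B i j)‖ ≤ M) :
    1 ≤ (∏ i ∈ Finset.univ.filter (fun i => hB.eigenvalues i ≠ 0), |hB.eigenvalues i|) *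
      ((2 * M) ^ Fintype.card ι) ^ Module.finrank ℚ E := by
  set z := (Finset.univ.filter (fun i => hB.eigenvalues i = 0)).card with hz
  have hcoef : ∀ σ : E →+* ℂ, σ (B.charpoly.coeff z) = (B.map σ).charpoly.coeff z := by
    intro σ
    rw [Matrix.charpoly_map, Polynomial.coeff_map]
  have hval : (B.map J).charpoly.coeff z =
      ∏ i ∈ Finset.univ.filter (fun i => hB.eigenvalues i ≠ 0), (-(hB.eigenvalues i : ℂ)) := by
    rw [hB.charpoly_eq, ← Finset.prod_filter_mul_prod_filter_not Finset.univ
      (fun i => hB.eigenvalues i = 0)]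
    have : ∏ i ∈ Finset.univ.filter (fun i => hB.eigenvalues i = 0),
        (Polynomial.X - Polynomial.C ((hB.eigenvalues i : ℝ) : ℂ)) = Polynomial.X ^ z := by
      rw [hz, ← Finset.prod_const]
      refine Finset.prod_congr rfl fun i hi => ?_
      rw [(Finset.mem_filter.1 hi).2]
      simp
    erw [this]
    rw [mul_comm, Polynomial.coeff_mul_X_pow', if_pos le_rfl, Nat.sub_self,
      Polynomial.coeff_zero_eq_eval_zero, Polynomial.eval_prod]
    simp
  have hnorm : ‖J (B.charpoly.coeff z)‖ =
      ∏ i ∈ Finset.univ.filter (fun i => hB.eigenvalues i ≠ 0), |hB.eigenvalues i| := by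
    rw [hcoef, hval, norm_prod]
    refine Finset.prod_congr rfl fun i _ => ?_
    simp
  rw [← hnorm]
  refine norm_ge_of_integral J _ ?_ ?_ _ (one_le_pow₀ (by linarith)) ?_
  · let B' : Matrix ι ι (integralClosure ℤ E) := fun i j => ⟨B i j, hIntg i j⟩
    have : B = B'.map (algebraMap (integralClosure ℤ E) E) := by
      ext i j; rfl
    rw [this, Matrix.charpoly_map, Polynomial.coeff_map]
    exact (B'.charpoly.coeff z).2
  · intro h
    rw [h, map_zero, norm_zero] at hnorm
    have : 0 < ∏ i ∈ Finset.univ.filter (fun i => hB.eigenvalues i ≠ 0), |hB.eigenvalues i| :=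
      Finset.prod_pos fun i hi => abs_pos.2 (Finset.mem_filter.1 hi).2
    linarith
  · intro σ
    rw [hcoef]
    exact coeff_charpoly_le _ M h1 (hM σ) z

/-- number of small nonzero eigenvalues -/
lemma card_small {ι : Type*} [Fintype ι] (ev : ι → ℝ) (M Q : ℝ) (h1 : 1 ≤ M)
    (hM : ∀ i, |ev i| ≤ M) (hQ : 0 < Q)
    (hp : 1 ≤ (∏ i ∈ Finset.univ.filter (fun i => ev i ≠ 0), |ev i|) * Q)
    (ε : ℝ) (hε : 0 < ε) (hε1 : ε < 1) :
    ((Finset.univ.filter (fun i => ev i ≠ 0 ∧ |ev i| < ε)).card : ℝ) * (-Real.log ε) ≤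
      Real.log Q + Fintype.card ι * Real.log M := by
  set S := Finset.univ.filter (fun i => ev i ≠ 0) with hS
  have hsplit := Finset.prod_filter_mul_prod_filter_not S (fun i => |ev i| < ε) (fun i => |ev i|)
  have hSeq : S.filter (fun i => |ev i| < ε) =
      Finset.univ.filter (fun i => ev i ≠ 0 ∧ |ev i| < ε) := by
    rw [hS, Finset.filter_filter]
  rw [hSeq] at hsplit
  set s := (Finset.univ.filter (fun i => ev i ≠ 0 ∧ |ev i| < ε)).card with hs
  have hA : ∏ i ∈ Finset.univ.filter (fun i => ev i ≠ 0 ∧ |ev i| < ε), |ev i| ≤ ε ^ s := by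
    refine prod_le_pow_card_real _ _ _ (fun _ _ => abs_nonneg _) fun i hi => ?_
    exact (Finset.mem_filter.1 hi).2.2.le
  have hB : ∏ i ∈ S.filter (fun i => ¬ |ev i| < ε), |ev i| ≤ M ^ Fintype.card ι := by
    refine (prod_le_pow_card_real _ _ M (fun _ _ => abs_nonneg _) fun i _ => hM i).trans ?_
    exact pow_le_pow_right₀ h1 (Finset.card_le_univ _)
  have hle : 1 ≤ ε ^ s * M ^ Fintype.card ι * Q := by
    refine hp.trans (mul_le_mul_of_nonneg_right ?_ hQ.le)
    rw [← hsplit]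
    exact mul_le_mul hA hB (Finset.prod_nonneg fun _ _ => abs_nonneg _) (by positivity)
  have hlog := Real.log_nonneg hle
  rw [Real.log_mul (by positivity) (by positivity), Real.log_mul (by positivity) (by positivity),
    Real.log_pow, Real.log_pow] at hlog
  linarith

end LA

namespace LA

/-- permutation matrices -/
def pm (R : Type*) [Zero R] [One R] {k : ℕ} (σ : Equiv.Perm (Fin k)) : Matrix (Fin k) (Fin k) R :=
  Matrix.of fun x y => if σ y = x then 1 else 0

lemma pm_one {R : Type*} [Zero R] [One R] {k : ℕ} : pm R (1 : Equiv.Perm (Fin k)) = 1 := by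
  ext x y
  simp [pm, Matrix.one_apply, eq_comm]

lemma pm_mul {R : Type*} [CommRing R] {k : ℕ} (σ τ : Equiv.Perm (Fin k)) :
    pm R σ * pm R τ = pm R (σ * τ) := by
  ext x y
  rw [Matrix.mul_apply, Finset.sum_eq_single (τ y)]
  · by_cases h : σ (τ y) = x <;> simp [pm, h]
  · intro z _ hz
    simp [pm, Ne.symm hz]
  · simp

lemma pm_conjTranspose {k : ℕ} (σ : Equiv.Perm (Fin k)) :
    (pm ℂ σ)ᴴ = pm ℂ σ⁻¹ := by
  ext x y
  simp only [Matrix.conjTranspose_apply, pm, Matrix.of_apply]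
  have : σ x = y ↔ σ⁻¹ y = x := by
    rw [Equiv.Perm.inv_eq_iff_eq, eq_comm]
  simp only [this]
  split_ifs <;> simp

/-- normalized entrywise `ℓ¹` norm -/
def n1 {k : ℕ} (X : Matrix (Fin k) (Fin k) ℂ) : ℝ := (∑ i, ∑ j, ‖X i j‖) / k

lemma n1_nonneg {k : ℕ} (X : Matrix (Fin k) (Fin k) ℂ) : 0 ≤ n1 X := by
  unfold n1; positivity

lemma n1_add_le {k : ℕ} (X Y : Matrix (Fin k) (Fin k) ℂ) : n1 (X + Y) ≤ n1 X + n1 Y := by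
  unfold n1
  rw [← add_div]
  gcongr
  rw [← Finset.sum_add_distrib]
  refine Finset.sum_le_sum fun i _ => ?_
  rw [← Finset.sum_add_distrib]
  exact Finset.sum_le_sum fun j _ => norm_add_le _ _

lemma n1_smul {k : ℕ} (c : ℂ) (X : Matrix (Fin k) (Fin k) ℂ) : n1 (c • X) = ‖c‖ * n1 X := by
  simp [n1, ← Finset.mul_sum, mul_div_assoc]

lemma n1_conjTranspose {k : ℕ} (X : Matrix (Fin k) (Fin k) ℂ) : n1 Xᴴ = n1 X := by
  unfold n1
  rw [Finset.sum_comm]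
  simp

lemma n1_mul_left {k : ℕ} (X Y : Matrix (Fin k) (Fin k) ℂ) (C : ℝ)
    (hY : ∀ i, ∑ j, ‖Y i j‖ ≤ C) : n1 (X * Y) ≤ n1 X * C := by
  unfold n1
  rw [div_mul_eq_mul_div]
  gcongr
  rw [Finset.sum_mul]
  refine Finset.sum_le_sum fun i _ => ?_
  calc ∑ j, ‖(X * Y) i j‖ ≤ ∑ j, ∑ l, ‖X i l‖ * ‖Y l j‖ := by
        refine Finset.sum_le_sum fun j _ => ?_
        rw [Matrix.mul_apply]
        refine (norm_sum_le _ _).trans (Finset.sum_le_sum fun l _ => ?_)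
        rw [norm_mul]
    _ = ∑ l, ‖X i l‖ * ∑ j, ‖Y l j‖ := by
        rw [Finset.sum_comm]
        simp_rw [Finset.mul_sum]
    _ ≤ ∑ l, ‖X i l‖ * C := by
        gcongr with l
        exact hY l
    _ = (∑ l, ‖X i l‖) * C := by rw [Finset.sum_mul]

lemma n1_mul_right {k : ℕ} (X Y : Matrix (Fin k) (Fin k) ℂ) (C : ℝ)
    (hX : ∀ j, ∑ i, ‖X i j‖ ≤ C) : n1 (X * Y) ≤ n1 Y * C := by
  rw [← n1_conjTranspose, Matrix.conjTranspose_mul, ← n1_conjTranspose Y]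
  refine n1_mul_left _ _ C fun i => ?_
  simpa using hX i

lemma trace_le_n1 {k : ℕ} (X : Matrix (Fin k) (Fin k) ℂ) : ‖X.trace / k‖ ≤ n1 X := by
  unfold n1
  rw [norm_div, Complex.norm_natCast]
  gcongr
  refine (norm_sum_le _ _).trans (Finset.sum_le_sum fun i _ => ?_)
  exact Finset.single_le_sum (f := fun j => ‖X i j‖) (fun _ _ => norm_nonneg _) (Finset.mem_univ i)

lemma n1_pm_sub {k : ℕ} (σ τ : Equiv.Perm (Fin k)) :
    n1 (pm ℂ σ - pm ℂ τ) ≤ 2 * permHamming σ τ := by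
  unfold n1 permHamming
  rw [← mul_div_assoc]
  gcongr
  rw [Finset.sum_comm, Finset.card_filter, Nat.cast_sum, Finset.mul_sum]
  refine Finset.sum_le_sum fun y _ => ?_
  by_cases h : σ y = τ y
  · simp [pm, h]
  · simp only [ne_eq, h, not_false_iff, if_true]
    calc ∑ x, ‖(pm ℂ σ - pm ℂ τ) x y‖
        ≤ ∑ x, ((if σ y = x then 1 else 0) + (if τ y = x then 1 else 0) : ℝ) := by
          refine Finset.sum_le_sum fun x _ => ?_
          simp only [pm, Matrix.sub_apply, Matrix.of_apply]
          split_ifs <;> simp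
      _ ≤ 2 * ((1 : ℕ) : ℝ) := by
          rw [Finset.sum_add_distrib]
          simp
          norm_num

lemma pm_row {k : ℕ} (σ : Equiv.Perm (Fin k)) (x : Fin k) : ∑ y, ‖pm ℂ σ x y‖ = 1 := by
  rw [Finset.sum_eq_single (σ⁻¹ x)]
  · simp [pm]
  · intro y _ hy
    have : σ y ≠ x := by
      rintro rfl; simp at hy
    simp [pm, this]
  · simp

lemma pm_col {k : ℕ} (σ : Equiv.Perm (Fin k)) (y : Fin k) : ∑ x, ‖pm ℂ σ x y‖ = 1 := by
  rw [Finset.sum_eq_single (σ y)]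
  · simp [pm]
  · intro x _ hx
    simp [pm, Ne.symm hx]
  · simp

lemma permHamming_comm {k : ℕ} (σ τ : Equiv.Perm (Fin k)) : permHamming σ τ = permHamming τ σ := by
  simp [permHamming, eq_comm]

lemma permHamming_nonneg {k : ℕ} (σ τ : Equiv.Perm (Fin k)) : 0 ≤ permHamming σ τ := by
  unfold permHamming; positivity

lemma permHamming_triangle {k : ℕ} (σ τ ρ : Equiv.Perm (Fin k)) :
    permHamming σ ρ ≤ permHamming σ τ + permHamming τ ρ := by
  unfold permHamming
  rw [← add_div]
  gcongr
  rw [← Nat.cast_add, Nat.cast_le]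
  refine le_trans (Finset.card_le_card ?_) (Finset.card_union_le _ _)
  intro x
  simp only [Finset.mem_filter, Finset.mem_univ, true_and, Finset.mem_union]
  intro h
  by_contra! h2
  exact h (h2.1.trans h2.2)

lemma permHamming_mul_left {k : ℕ} (σ τ ρ : Equiv.Perm (Fin k)) :
    permHamming (σ * τ) (σ * ρ) = permHamming τ ρ := by
  simp [permHamming]

/-- null sequences -/
def Null {k : ℕ → ℕ} (X : ∀ m, Matrix (Fin (k m)) (Fin (k m)) ℂ) : Prop :=
  Tendsto (fun m => n1 (X m)) atTop (𝓝 0)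

/-- bounded sequences -/
def Bdd {k : ℕ → ℕ} (X : ∀ m, Matrix (Fin (k m)) (Fin (k m)) ℂ) : Prop :=
  ∃ C : ℝ, 0 ≤ C ∧ ∀ m, (∀ i, ∑ j, ‖X m i j‖ ≤ C) ∧ ∀ j, ∑ i, ‖X m i j‖ ≤ C

section seq
variable {k : ℕ → ℕ} {X Y : ∀ m, Matrix (Fin (k m)) (Fin (k m)) ℂ}

lemma Null.of_le (u : ℕ → ℝ) (h : ∀ m, n1 (X m) ≤ u m) (hu : Tendsto u atTop (𝓝 0)) : Null X :=
  squeeze_zero (fun _ => n1_nonneg _) h hu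

lemma Null.add (hX : Null X) (hY : Null Y) : Null (fun m => X m + Y m) :=
  Null.of_le _ (fun m => n1_add_le _ _) (by simpa using Tendsto.add hX hY)

lemma Null.zero : Null (fun m => (0 : Matrix (Fin (k m)) (Fin (k m)) ℂ)) := by
  simp [Null, n1]

lemma Null.smul (c : ℂ) (hX : Null X) : Null (fun m => c • X m) :=
  Null.of_le _ (fun m => (n1_smul _ _).le) (by simpa using Tendsto.const_mul ‖c‖ hX)

lemma Null.star (hX : Null X) : Null (fun m => (X m)ᴴ) := by
  simpa [Null, n1_conjTranspose] using hX

lemma Null.mul_bdd (hX : Null X) (hY : Bdd Y) : Null (fun m => X m * Y m) := by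
  obtain ⟨C, _, hC⟩ := hY
  exact Null.of_le _ (fun m => n1_mul_left _ _ C (hC m).1) (by simpa using Tendsto.mul_const C hX)

lemma Null.bdd_mul (hX : Bdd X) (hY : Null Y) : Null (fun m => X m * Y m) := by
  obtain ⟨C, _, hC⟩ := hX
  exact Null.of_le _ (fun m => n1_mul_right _ _ C (hC m).2) (by simpa using Tendsto.mul_const C hY)

lemma Bdd.zero : Bdd (fun m => (0 : Matrix (Fin (k m)) (Fin (k m)) ℂ)) :=
  ⟨0, le_rfl, fun m => by simp⟩

lemma Bdd.add (hX : Bdd X) (hY : Bdd Y) : Bdd (fun m => X m + Y m) := by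
  obtain ⟨C, h0, hC⟩ := hX
  obtain ⟨D, h0', hD⟩ := hY
  refine ⟨C + D, by positivity, fun m => ⟨fun i => ?_, fun i => ?_⟩⟩
  · refine le_trans (Finset.sum_le_sum fun j _ => norm_add_le _ _) ?_
    rw [Finset.sum_add_distrib]
    exact add_le_add ((hC m).1 i) ((hD m).1 i)
  · refine le_trans (Finset.sum_le_sum fun j _ => norm_add_le _ _) ?_
    rw [Finset.sum_add_distrib]
    exact add_le_add ((hC m).2 i) ((hD m).2 i)

lemma Bdd.smul (c : ℂ) (hX : Bdd X) : Bdd (fun m => c • X m) := by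
  obtain ⟨C, h0, hC⟩ := hX
  refine ⟨‖c‖ * C, by positivity, fun m => ⟨fun i => ?_, fun i => ?_⟩⟩
  · simp only [Matrix.smul_apply, norm_smul, ← Finset.mul_sum]
    exact mul_le_mul_of_nonneg_left ((hC m).1 i) (norm_nonneg _)
  · simp only [Matrix.smul_apply, norm_smul, ← Finset.mul_sum]
    exact mul_le_mul_of_nonneg_left ((hC m).2 i) (norm_nonneg _)

lemma Bdd.star (hX : Bdd X) : Bdd (fun m => (X m)ᴴ) := by
  obtain ⟨C, h0, hC⟩ := hX
  exact ⟨C, h0, fun m => ⟨fun i => by simpa using (hC m).2 i, fun i => by simpa using (hC m).1 i⟩⟩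

lemma row_mul {ι : Type*} [Fintype ι] (X Y : Matrix ι ι ℂ) (C D : ℝ) (hD0 : 0 ≤ D)
    (hX : ∀ i, ∑ j, ‖X i j‖ ≤ C) (hY : ∀ i, ∑ j, ‖Y i j‖ ≤ D) (i : ι) :
    ∑ j, ‖(X * Y) i j‖ ≤ C * D :=
  calc ∑ j, ‖(X * Y) i j‖ ≤ ∑ j, ∑ l, ‖X i l‖ * ‖Y l j‖ := by
        refine Finset.sum_le_sum fun j _ => ?_
        rw [Matrix.mul_apply]
        refine (norm_sum_le _ _).trans (Finset.sum_le_sum fun l _ => ?_)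
        rw [norm_mul]
    _ = ∑ l, ‖X i l‖ * ∑ j, ‖Y l j‖ := by
        rw [Finset.sum_comm]
        simp_rw [Finset.mul_sum]
    _ ≤ ∑ l, ‖X i l‖ * D := by
        gcongr with l
        exact hY l
    _ = (∑ l, ‖X i l‖) * D := by rw [Finset.sum_mul]
    _ ≤ C * D := mul_le_mul_of_nonneg_right (hX i) hD0

lemma Bdd.mul (hX : Bdd X) (hY : Bdd Y) : Bdd (fun m => X m * Y m) := by
  obtain ⟨C, h0, hC⟩ := hX
  obtain ⟨D, h0', hD⟩ := hY
  refine ⟨C * D, by positivity, fun m => ⟨fun i => ?_, fun i => ?_⟩⟩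
  · exact row_mul _ _ _ _ h0' (hC m).1 (hD m).1 i
  · have := row_mul (Y m)ᴴ (X m)ᴴ D C h0 (fun i => by simpa using (hD m).2 i)
      (fun i => by simpa using (hC m).2 i) i
    rw [← Matrix.conjTranspose_mul, mul_comm D C] at this
    simpa using this

end seq

end LA

namespace LA

variable {Γ : Type*} [Group Γ]

/-- linear extension of a map to permutations -/
def Phi {R : Type*} [CommRing R] {k : ℕ} (f : Γ → Equiv.Perm (Fin k)) (x : MonoidAlgebra R Γ) :
    Matrix (Fin k) (Fin k) R :=
  x.coeff.sum fun g r => r • pm R (f g)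

lemma Phi_add {R : Type*} [CommRing R] {k : ℕ} (f : Γ → Equiv.Perm (Fin k))
    (x y : MonoidAlgebra R Γ) : Phi f (x + y) = Phi f x + Phi f y := by
  unfold Phi
  rw [MonoidAlgebra.coeff_add, Finsupp.sum_add_index']
  · simp
  · intro a b c; rw [add_smul]

lemma Phi_single {R : Type*} [CommRing R] {k : ℕ} (f : Γ → Equiv.Perm (Fin k))
    (g : Γ) (r : R) : Phi f (MonoidAlgebra.single g r) = r • pm R (f g) := by
  simp [Phi]

lemma Phi_zero {R : Type*} [CommRing R] {k : ℕ} (f : Γ → Equiv.Perm (Fin k)) :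
    Phi f (0 : MonoidAlgebra R Γ) = 0 := by
  simp [Phi]

lemma Phi_sum {R : Type*} [CommRing R] {k : ℕ} (f : Γ → Equiv.Perm (Fin k))
    {ι : Type*} (s : Finset ι) (x : ι → MonoidAlgebra R Γ) :
    Phi f (∑ i ∈ s, x i) = ∑ i ∈ s, Phi f (x i) := by
  classical
  induction s using Finset.induction_on with
  | empty => simp [Phi_zero]
  | insert a s ha ih => rw [Finset.sum_insert ha, Finset.sum_insert ha, Phi_add, ih]

lemma Phi_apply {R : Type*} [CommRing R] {k : ℕ} (f : Γ → Equiv.Perm (Fin k))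
    (x : MonoidAlgebra R Γ) (S : Finset Γ) (hS : x.coeff.support ⊆ S) (u v : Fin k) :
    Phi f x u v = ∑ g ∈ S, x.coeff g * pm R (f g) u v := by
  unfold Phi
  rw [Finsupp.sum_of_support_subset _ hS _ (by simp), Matrix.sum_apply]
  simp

section sofic

variable {k : ℕ → ℕ} (f : ∀ m, Γ → Equiv.Perm (Fin (k m)))

/-- sofic approximation data -/
structure Sof : Prop where
  pos : ∀ m, 0 < k m
  mul : ∀ x y : Γ, Tendsto (fun n => permHamming (f n x * f n y) (f n (x * y))) atTop (𝓝 0)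
  free : ∀ x : Γ, x ≠ 1 → Tendsto (fun n => permHamming (f n x) 1) atTop (𝓝 1)

variable {f}

lemma Sof.one (h : Sof f) : Tendsto (fun n => permHamming (f n 1) 1) atTop (𝓝 0) := by
  have := h.mul 1 1
  simp only [mul_one] at this
  refine this.congr fun n => ?_
  have e := permHamming_mul_left (f n 1) (f n 1) 1
  rw [mul_one] at e
  exact e

lemma Sof.inv (h : Sof f) (g : Γ) :
    Tendsto (fun n => permHamming (f n g)⁻¹ (f n g⁻¹)) atTop (𝓝 0) := by
  have h1 := (h.mul g g⁻¹)
  rw [mul_inv_cancel] at h1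
  have h2 := h1.add h.one
  rw [add_zero] at h2
  refine squeeze_zero (fun _ => permHamming_nonneg _ _) (fun n => ?_) h2
  rw [← permHamming_mul_left (f n g), mul_inv_cancel, permHamming_comm]
  exact permHamming_triangle _ _ _

lemma Null_pm (σ τ : ∀ m, Equiv.Perm (Fin (k m)))
    (h : Tendsto (fun n => permHamming (σ n) (τ n)) atTop (𝓝 0)) :
    Null (fun m => pm ℂ (σ m) - pm ℂ (τ m)) :=
  Null.of_le _ (fun m => n1_pm_sub _ _) (by simpa using h.const_mul 2)

lemma Bdd_pm (σ : ∀ m, Equiv.Perm (Fin (k m))) : Bdd (fun m => pm ℂ (σ m)) :=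
  ⟨1, zero_le_one, fun m => ⟨fun i => (pm_row _ i).le, fun i => (pm_col _ i).le⟩⟩

lemma Bdd_Phi (f : ∀ m, Γ → Equiv.Perm (Fin (k m))) (x : MonoidAlgebra ℂ Γ) :
    Bdd (fun m => Phi (f m) x) := by
  induction x using MonoidAlgebra.induction_linear with
  | zero => simpa only [Phi_zero] using Bdd.zero
  | add x y hx hy => simpa only [Phi_add] using hx.add hy
  | single g r => simpa only [Phi_single] using (Bdd_pm fun m => f m g).smul r

lemma Sof.Phi_mul (h : Sof f) (x y : MonoidAlgebra ℂ Γ) :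
    Null (fun m => Phi (f m) x * Phi (f m) y - Phi (f m) (x * y)) := by
  induction x using MonoidAlgebra.induction_linear with
  | zero => simpa [Phi_zero] using Null.zero
  | add x x' hx hx' =>
    have := hx.add hx'
    simp only [add_mul, Phi_add]
    convert this using 2
    abel
  | single g r =>
    induction y using MonoidAlgebra.induction_linear with
    | zero => simpa [Phi_zero] using Null.zero
    | add x x' hx hx' =>
      have := hx.add hx'
      simp only [mul_add, Phi_add]
      convert this using 2
      abel
    | single g' r' =>
      have := (Null_pm _ _ (h.mul g g')).smul (r * r')
      simp only [MonoidAlgebra.single_mul_single, Phi_single, smul_mul_smul_comm, pm_mul]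
      simpa only [smul_sub] using this

/-- `X` asymptotically represents `x`. -/
def Approx (f : ∀ m, Γ → Equiv.Perm (Fin (k m))) (x : MonoidAlgebra ℂ Γ)
    (X : ∀ m, Matrix (Fin (k m)) (Fin (k m)) ℂ) : Prop :=
  Bdd X ∧ Null (fun m => X m - Phi (f m) x)

lemma Approx_Phi (f : ∀ m, Γ → Equiv.Perm (Fin (k m))) (x : MonoidAlgebra ℂ Γ) :
    Approx f x (fun m => Phi (f m) x) :=
  ⟨Bdd_Phi f x, by simpa using Null.zero⟩

lemma Approx.zero : Approx f 0 (fun m => 0) :=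
  ⟨Bdd.zero, by simpa [Phi_zero] using Null.zero⟩

lemma Approx.one (h : Sof f) : Approx f 1 (fun m => 1) := by
  constructor
  · simpa only [pm_one] using Bdd_pm (k := k) (fun m => 1)
  · have := Null_pm (fun m => 1) (fun m => f m 1) (by simpa only [permHamming_comm] using h.one)
    simpa only [pm_one, MonoidAlgebra.one_def, Phi_single, one_smul] using this

lemma Approx.add {x y : MonoidAlgebra ℂ Γ} {X Y : ∀ m, Matrix (Fin (k m)) (Fin (k m)) ℂ}
    (hX : Approx f x X) (hY : Approx f y Y) : Approx f (x + y) (fun m => X m + Y m) := by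
  refine ⟨hX.1.add hY.1, ?_⟩
  have := hX.2.add hY.2
  simp only [Phi_add]
  convert this using 2
  abel

lemma Approx.sum {ι : Type*} (s : Finset ι) {x : ι → MonoidAlgebra ℂ Γ}
    {X : ι → ∀ m, Matrix (Fin (k m)) (Fin (k m)) ℂ}
    (hX : ∀ i, Approx f (x i) (X i)) : Approx f (∑ i ∈ s, x i) (fun m => ∑ i ∈ s, X i m) := by
  classical
  induction s using Finset.induction_on with
  | empty => simpa using Approx.zero
  | insert a s ha ih => simpa only [Finset.sum_insert ha] using (hX a).add ih

lemma Approx.mul (h : Sof f) {x y : MonoidAlgebra ℂ Γ}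
    {X Y : ∀ m, Matrix (Fin (k m)) (Fin (k m)) ℂ}
    (hX : Approx f x X) (hY : Approx f y Y) : Approx f (x * y) (fun m => X m * Y m) := by
  refine ⟨hX.1.mul hY.1, ?_⟩
  have := ((hX.2.mul_bdd hY.1).add (Null.bdd_mul (Bdd_Phi f x) hY.2)).add (h.Phi_mul x y)
  convert this using 2
  noncomm_ring

lemma exists_star (h : Sof f) (R : GNSRep Γ (canonicalTrace Γ)) (x : MonoidAlgebra ℂ Γ) :
    ∃ x', R.π x' = star (R.π x) ∧ Approx f x' (fun m => (Phi (f m) x)ᴴ) := by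
  induction x using MonoidAlgebra.induction_linear with
  | zero => exact ⟨0, by simp, by simpa [Phi_zero] using Approx.zero⟩
  | add x y hx hy =>
    obtain ⟨x', h1, h2⟩ := hx
    obtain ⟨y', h3, h4⟩ := hy
    refine ⟨x' + y', by simp [h1, h3], ?_⟩
    simpa only [Phi_add, Matrix.conjTranspose_add] using h2.add h4
  | single g r =>
    refine ⟨MonoidAlgebra.single g⁻¹ (star r), ?_, ?_, ?_⟩
    · have h1 : ∀ (g : Γ) (r : ℂ), (MonoidAlgebra.single g r : MonoidAlgebra ℂ Γ) =
        r • MonoidAlgebra.of ℂ Γ g := by simp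
      rw [h1, h1 g, map_smul, map_smul, star_smul, R.star_of]
    · exact (Bdd_Phi f _).star
    · have := (Null_pm _ _ (h.inv g)).smul (star r)
      simp only [Phi_single, Matrix.conjTranspose_smul, pm_conjTranspose]
      simpa only [smul_sub] using this

lemma trace_pm {k : ℕ} (hk : 0 < k) (σ : Equiv.Perm (Fin k)) :
    (pm ℂ σ).trace / k = ((1 - permHamming σ 1 : ℝ) : ℂ) := by
  have h1 : (pm ℂ σ).trace = ((Finset.univ.filter fun x => σ x = x).card : ℂ) := by
    simp [Matrix.trace, pm]
  have h2 := Finset.card_filter_add_card_filter_not (s := (Finset.univ : Finset (Fin k)))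
    (fun x => σ x = x)
  rw [Finset.card_univ, Fintype.card_fin] at h2
  have h3 : ((Finset.univ.filter fun x => σ x = x).card : ℂ) +
    ((Finset.univ.filter fun x => ¬ σ x = x).card : ℂ) = k := by exact_mod_cast h2
  have hk' : (k : ℂ) ≠ 0 := by exact_mod_cast hk.ne'
  rw [h1]
  simp only [permHamming, Equiv.Perm.one_apply, ne_eq]
  push_cast
  have h4 : ((Finset.univ.filter fun x => σ x = x).card : ℂ) =
    k - ((Finset.univ.filter fun x => ¬ σ x = x).card : ℂ) := by rw [← h3]; simp
  rw [h4, sub_div, div_self hk']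
  congr

lemma Sof.trace_Phi (h : Sof f) (x : MonoidAlgebra ℂ Γ) :
    Tendsto (fun m => (Phi (f m) x).trace / (k m : ℂ)) atTop (𝓝 (x.coeff 1)) := by
  induction x using MonoidAlgebra.induction_linear with
  | zero => simp [Phi_zero]
  | add x y hx hy =>
    simpa [Phi_add, add_div] using hx.add hy
  | single g r =>
    simp only [Phi_single, Matrix.trace_smul, smul_eq_mul, mul_div_assoc, trace_pm (h.pos _)]
    by_cases hg : g = 1
    · subst hg
      have := (Complex.continuous_ofReal.tendsto _).comp (h.one.const_sub 1)
      simpa using this.const_mul r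
    · have := (Complex.continuous_ofReal.tendsto _).comp ((h.free g hg).const_sub 1)
      have h0 : (MonoidAlgebra.single g r : MonoidAlgebra ℂ Γ).coeff 1 = 0 := by
        simp [hg]
      rw [h0]
      simpa using this.const_mul r

lemma Approx.trace (h : Sof f) {x : MonoidAlgebra ℂ Γ}
    {X : ∀ m, Matrix (Fin (k m)) (Fin (k m)) ℂ} (hX : Approx f x X) :
    Tendsto (fun m => (X m).trace / (k m : ℂ)) atTop (𝓝 (x.coeff 1)) := by
  have h1 := h.trace_Phi x
  have h2 : Tendsto (fun m => (X m - Phi (f m) x).trace / (k m : ℂ)) atTop (𝓝 0) :=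
    squeeze_zero_norm (fun m => trace_le_n1 _) hX.2
  have := h2.add h1
  simpa [Matrix.trace_sub, sub_div] using this

/-- matrix version -/
def ApproxM {n : ℕ} (f : ∀ m, Γ → Equiv.Perm (Fin (k m)))
    (b : Matrix (Fin n) (Fin n) (MonoidAlgebra ℂ Γ))
    (X : ∀ m, Matrix (Fin n) (Fin n) (Matrix (Fin (k m)) (Fin (k m)) ℂ)) : Prop :=
  ∀ i j, Approx f (b i j) (fun m => X m i j)

lemma ApproxM.mul (h : Sof f) {n : ℕ} {b c : Matrix (Fin n) (Fin n) (MonoidAlgebra ℂ Γ)}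
    {X Y : ∀ m, Matrix (Fin n) (Fin n) (Matrix (Fin (k m)) (Fin (k m)) ℂ)}
    (hX : ApproxM f b X) (hY : ApproxM f c Y) : ApproxM f (b * c) (fun m => X m * Y m) := by
  intro i j
  simp only [Matrix.mul_apply]
  exact Approx.sum _ fun l => (hX i l).mul h (hY l j)

lemma ApproxM.one (h : Sof f) {n : ℕ} :
    ApproxM f (1 : Matrix (Fin n) (Fin n) (MonoidAlgebra ℂ Γ)) (fun m => 1) := by
  intro i j
  by_cases hij : i = j
  · subst hij
    simpa using Approx.one h
  · simpa [hij] using Approx.zero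

lemma ApproxM.pow (h : Sof f) {n : ℕ} {b : Matrix (Fin n) (Fin n) (MonoidAlgebra ℂ Γ)}
    {X : ∀ m, Matrix (Fin n) (Fin n) (Matrix (Fin (k m)) (Fin (k m)) ℂ)}
    (hX : ApproxM f b X) (l : ℕ) : ApproxM f (b ^ l) (fun m => X m ^ l) := by
  induction l with
  | zero => simpa using ApproxM.one h
  | succ l ih => simpa only [pow_succ] using ih.mul h hX

lemma ApproxM.trace (h : Sof f) {n : ℕ} {b : Matrix (Fin n) (Fin n) (MonoidAlgebra ℂ Γ)}
    {X : ∀ m, Matrix (Fin n) (Fin n) (Matrix (Fin (k m)) (Fin (k m)) ℂ)}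
    (hX : ApproxM f b X) :
    Tendsto (fun m => (Matrix.compRingEquiv _ _ _ (X m)).trace / (k m : ℂ)) atTop
      (𝓝 (∑ i, (b i i).coeff 1)) := by
  have := tendsto_finsetSum Finset.univ fun i _ => (hX i i).trace h
  refine this.congr fun m => ?_
  rw [← Finset.sum_div]
  congr 1
  simp only [Matrix.trace, Fintype.sum_prod_type]
  rfl

/-- the block matrix of permutation-type matrices attached to `a` -/
def blk {R : Type*} [CommRing R] {k : ℕ} (f : Γ → Equiv.Perm (Fin k)) {n : ℕ}
    (a : Matrix (Fin n) (Fin n) (MonoidAlgebra R Γ)) :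
    Matrix (Fin n × Fin k) (Fin n × Fin k) R :=
  Matrix.of fun p q => Phi f (a p.1 q.1) p.2 q.2

/-- moment convergence -/
lemma moments (h : Sof f) (R : GNSRep Γ (canonicalTrace Γ)) {n : ℕ}
    (a : Matrix (Fin n) (Fin n) (MonoidAlgebra ℂ Γ)) (l : ℕ) :
    Tendsto (fun m => (((blk (f m) a)ᴴ * blk (f m) a) ^ l).trace.re / (k m : ℝ)) atTop
      (𝓝 (tau R ((star (matAct R.π a) * matAct R.π a) ^ l))) := by
  choose st hst1 hst2 using exists_star h R
  let a' : Matrix (Fin n) (Fin n) (MonoidAlgebra ℂ Γ) := fun i j => st (a j i)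
  rw [star_matAct R.π a a' (fun i j => hst1 _), ← matAct_mul, ← matAct_pow, tau_matAct]
  let X : ∀ m, Matrix (Fin n) (Fin n) (Matrix (Fin (k m)) (Fin (k m)) ℂ) :=
    fun m i j => Phi (f m) (a i j)
  let X' : ∀ m, Matrix (Fin n) (Fin n) (Matrix (Fin (k m)) (Fin (k m)) ℂ) :=
    fun m i j => (Phi (f m) (a j i))ᴴ
  have hX : ApproxM f a X := fun i j => Approx_Phi f _
  have hX' : ApproxM f a' X' := fun i j => hst2 _
  have key := (((hX'.mul h hX).pow h l).trace h)
  have key2 := (Complex.continuous_re.tendsto _).comp key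
  refine key2.congr fun m => ?_
  simp only [Function.comp]
  have e1 : Matrix.compRingEquiv _ _ _ (X m) = blk (f m) a := rfl
  have e2 : Matrix.compRingEquiv _ _ _ (X' m) = (blk (f m) a)ᴴ := rfl
  rw [map_pow, map_mul, e1, e2]
  rw [← Complex.ofReal_natCast, Complex.div_ofReal_re]

end sofic

end LA

namespace LA

variable {Γ : Type*} [Group Γ] (R : GNSRep Γ (canonicalTrace Γ))

lemma poly_conv {n : ℕ} (x : PiLp 2 (fun _ : Fin n => R.H) →L[ℂ] PiLp 2 (fun _ : Fin n => R.H))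
    (ι : ℕ → Type) [∀ m, Fintype (ι m)] (ev : ∀ m, ι m → ℝ) (k : ℕ → ℕ)
    (hmom : ∀ l : ℕ, Tendsto (fun m => (∑ i, ev m i ^ l) / (k m : ℝ)) atTop
      (𝓝 (tau R ((star x * x) ^ l)))) (p : Polynomial ℝ) :
    Tendsto (fun m => (∑ i, p.eval (ev m i)) / (k m : ℝ)) atTop
      (𝓝 (tau R (Polynomial.aeval (star x * x) p))) := by
  rw [tau_aeval, Polynomial.sum_def]
  have := tendsto_finsetSum p.support fun l _ => (hmom l).const_mul (p.coeff l)
  refine this.congr fun m => ?_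
  simp only [Polynomial.eval_eq_sum, Polynomial.sum_def]
  rw [Finset.sum_comm, Finset.sum_div]
  refine Finset.sum_congr rfl fun l _ => ?_
  rw [← Finset.mul_sum, mul_div_assoc]

lemma weak_conv {n : ℕ} (x : PiLp 2 (fun _ : Fin n => R.H) →L[ℂ] PiLp 2 (fun _ : Fin n => R.H))
    (ι : ℕ → Type) [∀ m, Fintype (ι m)] (ev : ∀ m, ι m → ℝ) (k : ℕ → ℕ)
    (hk : ∀ m, 0 < k m) (hcard : ∀ m, Fintype.card (ι m) = n * k m)
    (M : ℝ) (h0 : ∀ m i, 0 ≤ ev m i) (hM : ∀ m i, ev m i ≤ M)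
    (hmom : ∀ l : ℕ, Tendsto (fun m => (∑ i, ev m i ^ l) / (k m : ℝ)) atTop
      (𝓝 (tau R ((star x * x) ^ l))))
    (h : ℝ → ℝ) (hc : ContinuousOn h (Set.Ici 0)) :
    Tendsto (fun m => (∑ i, h (ev m i)) / (k m : ℝ)) atTop
      (𝓝 (tau R (cfc h (star x * x)))) := by
  rw [Metric.tendsto_atTop]
  intro δ hδ
  set T := star x * x with hT
  have hsa : IsSelfAdjoint T := IsSelfAdjoint.star_mul_self x
  set K := max M (‖T‖ * ‖(1 : PiLp 2 (fun _ : Fin n => R.H) →L[ℂ] PiLp 2 (fun _ : Fin n => R.H))‖)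
    with hK
  set η := δ / (3 * (n + 1)) with hη
  have hη0 : 0 < η := by positivity
  have hnη : n * η < δ / 3 := by
    rw [hη]
    field_simp
    linarith
  obtain ⟨p, hp⟩ := exists_polynomial_near_of_continuousOn 0 K h
    (hc.mono fun t ht => ht.1) η hη0
  have hspec : ∀ t ∈ spectrum ℝ T, t ∈ Set.Icc 0 K := by
    intro t ht
    refine ⟨star_mul_self_nonneg' R x t ht, le_trans (le_abs_self t) (le_trans ?_ (le_max_right _ _))⟩
    exact spectrum.norm_le_norm_mul_of_mem ht
  obtain ⟨N, hN⟩ := (Metric.tendsto_atTop.1 (poly_conv R x ι ev k hmom p)) (δ / 3) (by positivity)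
  refine ⟨N, fun m hm => ?_⟩
  have e1 := hN m hm
  rw [Real.dist_eq] at e1 ⊢
  have hkm : (0 : ℝ) < k m := by exact_mod_cast hk m
  have e2 : |(∑ i, h (ev m i)) / (k m : ℝ) - (∑ i, p.eval (ev m i)) / (k m : ℝ)| ≤ n * η := by
    rw [← sub_div, ← Finset.sum_sub_distrib, abs_div, abs_of_pos hkm, div_le_iff₀ hkm]
    refine (Finset.abs_sum_le_sum_abs _ _).trans ?_
    refine (Finset.sum_le_card_nsmul _ _ η fun i _ => ?_).trans ?_
    · rw [abs_sub_comm]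
      exact (hp _ ⟨h0 m i, (hM m i).trans (le_max_left _ _)⟩).le
    · rw [Finset.card_univ, hcard, nsmul_eq_mul]
      push_cast
      exact le_of_eq (by ring)
  have e3 : |tau R (Polynomial.aeval T p) - tau R (cfc h T)| ≤ n * η := by
    rw [← tau_sub, ← cfc_polynomial p T hsa,
      ← cfc_sub p.eval h T p.continuous.continuousOn
        (hc.mono fun t ht => (hspec t ht).1)]
    refine (abs_tau_le R _).trans ?_
    gcongr
    exact norm_cfc_le hη0.le fun t ht => (hp t (hspec t ht)).le
  rw [abs_lt] at e1 ⊢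
  rw [abs_le] at e2 e3
  constructor <;> linarith [e1.1, e1.2, e2.1, e2.2, e3.1, e3.2]

lemma kernel_conv {n : ℕ} (a : Matrix (Fin n) (Fin n) (MonoidAlgebra ℂ Γ))
    (ι : ℕ → Type) [∀ m, Fintype (ι m)] (ev : ∀ m, ι m → ℝ) (k : ℕ → ℕ)
    (hk : ∀ m, 0 < k m) (hcard : ∀ m, Fintype.card (ι m) = n * k m)
    (M : ℝ) (h0 : ∀ m i, 0 ≤ ev m i) (hM : ∀ m i, ev m i ≤ M)
    (hmom : ∀ l : ℕ, Tendsto (fun m => (∑ i, ev m i ^ l) / (k m : ℝ)) atTop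
      (𝓝 (tau R ((star (matAct R.π a) * matAct R.π a) ^ l))))
    (C : ℝ) (hC : ∀ m, ∀ ε : ℝ, 0 < ε → ε < 1 →
      ((Finset.univ.filter (fun i => ev m i ≠ 0 ∧ |ev m i| < ε)).card : ℝ) * (-Real.log ε)
        ≤ C * k m) :
    Tendsto (fun m => ((Finset.univ.filter (fun i => ev m i = 0)).card : ℝ) / (k m : ℝ)) atTop
      (𝓝 (R.kerDim a)) := by
  have hw := weak_conv R (matAct R.π a) ι ev k hk hcard M h0 hM hmom
  rw [kerDim_eq]
  set S := {r : ℝ | ∃ h : ℝ → ℝ, ContinuousOn h (Set.Ici 0) ∧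
      (∀ t ∈ Set.Ici (0:ℝ), h t ∈ Set.Icc (0:ℝ) 1) ∧ h 0 = 1 ∧
      r = tau R (cfc h (star (matAct R.π a) * matAct R.π a))} with hS
  have hbdd : BddBelow S := by
    refine ⟨0, ?_⟩
    rintro r ⟨h, h1, h2, h3, rfl⟩
    refine ge_of_tendsto' (hw h h1) fun m => ?_
    exact div_nonneg (Finset.sum_nonneg fun i _ => (h2 _ (h0 m i)).1) (Nat.cast_nonneg _)
  have hne : S.Nonempty := ⟨_, fun _ => 1, continuousOn_const, fun t _ => by simp, rfl, rfl⟩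
  rw [tendsto_order]
  constructor
  · intro b hb
    obtain ⟨δ, hδ0, hδ⟩ : ∃ δ, 0 < δ ∧ b + 2 * δ < sInf S :=
      ⟨(sInf S - b) / 3, by linarith, by linarith⟩
    obtain ⟨ε, hε0, hε1, hεC⟩ : ∃ ε : ℝ, 0 < ε ∧ ε < 1 ∧ C < δ * (-Real.log ε) := by
      refine ⟨Real.exp (-((|C| + 1) / δ)), Real.exp_pos _, ?_, ?_⟩
      · rw [Real.exp_lt_one_iff]
        have : 0 < (|C| + 1) / δ := by positivity
        linarith
      · rw [Real.log_exp, neg_neg, mul_div_cancel₀ _ hδ0.ne']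
        linarith [le_abs_self C]
    let h : ℝ → ℝ := fun t => max 0 (1 - t / ε)
    have hcont : ContinuousOn h (Set.Ici 0) := by
      apply Continuous.continuousOn
      fun_prop
    have hmem : tau R (cfc h (star (matAct R.π a) * matAct R.π a)) ∈ S := by
      refine ⟨h, hcont, fun t ht => ⟨le_max_left _ _, max_le zero_le_one ?_⟩, by simp [h], rfl⟩
      have : 0 ≤ t / ε := div_nonneg ht hε0.le
      linarith
    have hle := csInf_le hbdd hmem
    have hev := (tendsto_order.1 (hw h hcont)).1 (b + δ) (by linarith)
    filter_upwards [hev] with m hm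
    have hkm : (0 : ℝ) < k m := by exact_mod_cast hk m
    have hlog : 0 < -Real.log ε := by linarith [Real.log_neg hε0 hε1]
    have hsmall : ((Finset.univ.filter (fun i => ev m i ≠ 0 ∧ |ev m i| < ε)).card : ℝ)
        ≤ δ * k m := by
      refine le_of_mul_le_mul_right ((hC m ε hε0 hε1).trans ?_) hlog
      nlinarith
    have hsum : ∑ i, h (ev m i) ≤ ((Finset.univ.filter (fun i => ev m i = 0)).card : ℝ) +
        ((Finset.univ.filter (fun i => ev m i ≠ 0 ∧ |ev m i| < ε)).card : ℝ) := by
      rw [Finset.card_filter, Finset.card_filter]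
      push_cast
      rw [← Finset.sum_add_distrib]
      refine Finset.sum_le_sum fun i _ => ?_
      have hi := h0 m i
      by_cases hz : ev m i = 0
      · simp [h, hz]
      · by_cases hs : |ev m i| < ε
        · have : 0 ≤ ev m i / ε := div_nonneg hi hε0.le
          simp [h, hz, hs, this]
        · have : 1 ≤ ev m i / ε := by
            rw [abs_of_nonneg hi] at hs
            rw [le_div_iff₀ hε0]
            linarith
          simp [h, hz, hs, this]
    rw [lt_div_iff₀ hkm] at hm ⊢
    nlinarith
  · intro b hb
    obtain ⟨r, ⟨h, h1, h2, h3, rfl⟩, hr⟩ := exists_lt_of_csInf_lt hne hb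
    filter_upwards [(tendsto_order.1 (hw h h1)).2 b hr] with m hm
    refine lt_of_le_of_lt ?_ hm
    gcongr
    rw [Finset.card_filter]
    push_cast
    refine Finset.sum_le_sum fun i _ => ?_
    by_cases hz : ev m i = 0
    · simp [hz, h3]
    · simpa [hz] using (h2 _ (h0 m i)).1

lemma trace_pow_eigenvalues {ι : Type*} [Fintype ι] [DecidableEq ι] (B : Matrix ι ι ℂ)
    (hB : B.IsHermitian) (l : ℕ) : (B ^ l).trace.re = ∑ i, hB.eigenvalues i ^ l := by
  conv_lhs => rw [hB.spectral_theorem]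
  rw [← map_pow, Unitary.conjStarAlgAut_apply, Matrix.trace_mul_comm, ← mul_assoc,
    Unitary.coe_star_mul_self, one_mul, Matrix.diagonal_pow, Matrix.trace_diagonal]
  simp [← Complex.ofReal_pow]

lemma Bdd_blk {k : ℕ → ℕ} (f : ∀ m, Γ → Equiv.Perm (Fin (k m))) {n : ℕ}
    (a : Matrix (Fin n) (Fin n) (MonoidAlgebra ℂ Γ)) :
    ∃ C : ℝ, 0 ≤ C ∧ ∀ m, (∀ p, ∑ q, ‖blk (f m) a p q‖ ≤ C) ∧
      ∀ q, ∑ p, ‖blk (f m) a p q‖ ≤ C := by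
  choose c hc0 hc using fun i j => Bdd_Phi f (a i j)
  refine ⟨∑ i, ∑ j, c i j, Finset.sum_nonneg fun i _ => Finset.sum_nonneg fun j _ => hc0 i j,
    fun m => ⟨fun p => ?_, fun q => ?_⟩⟩
  · rw [Fintype.sum_prod_type]
    refine le_trans (Finset.sum_le_sum fun j _ => (hc p.1 j m).1 p.2) ?_
    exact Finset.single_le_sum (f := fun i => ∑ j, c i j)
      (fun i _ => Finset.sum_nonneg fun j _ => hc0 i j) (Finset.mem_univ p.1)
  · rw [Fintype.sum_prod_type]
    refine le_trans (Finset.sum_le_sum fun i _ => (hc i q.1 m).2 q.2) ?_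
    refine Finset.sum_le_sum fun i _ => ?_
    exact Finset.single_le_sum (f := fun j => c i j) (fun j _ => hc0 i j) (Finset.mem_univ q.1)

end LA

namespace LA

variable {Γ : Type*} [Group Γ]

/-- apply a zero-preserving map to all coefficients -/
def mc {A B : Type*} [CommRing A] [CommRing B] (φ : A → B) (h : φ 0 = 0) {n : ℕ}
    (a : Matrix (Fin n) (Fin n) (MonoidAlgebra A Γ)) : Matrix (Fin n) (Fin n) (MonoidAlgebra B Γ) :=
  fun i i' => MonoidAlgebra.ofCoeff (Finsupp.mapRange φ h (a i i').coeff)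

lemma mc_coeff {A B : Type*} [CommRing A] [CommRing B] (φ : A → B) (h : φ 0 = 0) {n : ℕ}
    (a : Matrix (Fin n) (Fin n) (MonoidAlgebra A Γ)) (i j : Fin n) (g : Γ) :
    (mc φ h a i j).coeff g = φ ((a i j).coeff g) := by
  simp [mc]

lemma blk_map {A B : Type*} [CommRing A] [CommRing B] (φ : A →+* B) {n k : ℕ}
    (f : Γ → Equiv.Perm (Fin k))
    (a : Matrix (Fin n) (Fin n) (MonoidAlgebra A Γ)) (b : Matrix (Fin n) (Fin n) (MonoidAlgebra B Γ))
    (h : ∀ i j g, (b i j).coeff g = φ ((a i j).coeff g)) :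
    (blk f a).map φ = blk f b := by
  ext p q
  have hs : (b p.1 q.1).coeff.support ⊆ (a p.1 q.1).coeff.support := by
    intro g hg
    rw [Finsupp.mem_support_iff] at hg ⊢
    intro h0
    rw [h, h0, map_zero] at hg
    exact hg rfl
  simp only [blk, Matrix.map_apply, Matrix.of_apply]
  rw [Phi_apply f _ _ (subset_refl _), Phi_apply f _ _ hs, map_sum]
  refine Finset.sum_congr rfl fun g _ => ?_
  rw [map_mul, h]
  congr 1
  simp only [pm, Matrix.of_apply]
  split_ifs <;> simp

lemma blk_integral {A : Type*} [CommRing A] {n k : ℕ} (f : Γ → Equiv.Perm (Fin k))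
    (a : Matrix (Fin n) (Fin n) (MonoidAlgebra A Γ))
    (h : ∀ i j g, IsIntegral ℤ ((a i j).coeff g)) (p q) : IsIntegral ℤ (blk f a p q) := by
  simp only [blk, Matrix.of_apply]
  rw [Phi_apply f _ _ (subset_refl _)]
  refine IsIntegral.sum _ fun g _ => (h _ _ _).mul ?_
  simp only [pm, Matrix.of_apply]
  split_ifs
  · exact isIntegral_one
  · exact isIntegral_zero

lemma main_conv_E {k : ℕ → ℕ} {f : ∀ m, Γ → Equiv.Perm (Fin (k m))} (hf : Sof f)
    (R : GNSRep Γ (canonicalTrace Γ)) {n : ℕ} (a : Matrix (Fin n) (Fin n) (MonoidAlgebra ℂ Γ))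
    {E : Type*} [Field E] [NumberField E] (J : E →+* ℂ)
    (b b' : Matrix (Fin n) (Fin n) (MonoidAlgebra E Γ))
    (hb : ∀ i j g, (a i j).coeff g = J ((b i j).coeff g))
    (hb' : ∀ i j g, starRingEnd ℂ ((a i j).coeff g) = J ((b' i j).coeff g))
    (hi : ∀ i j g, IsIntegral ℤ ((b i j).coeff g))
    (hi' : ∀ i j g, IsIntegral ℤ ((b' i j).coeff g)) :
    Tendsto (fun m => (n : ℝ) - ((blk (f m) a).rank : ℝ) / (k m : ℝ)) atTop (𝓝 (R.kerDim a)) := by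
  have hH : ∀ m, ((blk (f m) a)ᴴ * blk (f m) a).IsHermitian := fun m =>
    Matrix.isHermitian_conjTranspose_mul_self _
  have hP : ∀ m, ((blk (f m) a)ᴴ * blk (f m) a).PosSemidef := fun m =>
    Matrix.posSemidef_conjTranspose_mul_self _
  let BE : ∀ m, Matrix (Fin n × Fin (k m)) (Fin n × Fin (k m)) E := fun m =>
    (blk (f m) b')ᵀ * blk (f m) b
  have hBE : ∀ m, (BE m).map J = (blk (f m) a)ᴴ * blk (f m) a := by
    intro m
    have e1 := blk_map J (f m) b a hb
    have e2 := blk_map J (f m) b' (mc (starRingEnd ℂ) (map_zero _) a)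
      (fun i j g => by rw [mc_coeff, hb'])
    have e3 := blk_map (starRingEnd ℂ) (f m) a (mc (starRingEnd ℂ) (map_zero _) a)
      (fun i j g => by rw [mc_coeff])
    simp only [BE]
    rw [Matrix.map_mul, e1, Matrix.transpose_map, e2, ← e3]
    rfl
  -- uniform bounds
  have hbd : ∀ σ : E →+* ℂ, ∃ M : ℝ, ∀ m, ∀ i, ∑ j, ‖σ (BE m i j)‖ ≤ M := by
    intro σ
    obtain ⟨C, hC0, hC⟩ := Bdd_blk f (mc σ (map_zero _) b)
    obtain ⟨D, hD0, hD⟩ := Bdd_blk f (mc σ (map_zero _) b')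
    refine ⟨D * C, fun m i => ?_⟩
    have e : (BE m).map σ = (blk (f m) (mc σ (map_zero _) b'))ᵀ * blk (f m) (mc σ (map_zero _) b) := by
      simp only [BE]
      rw [Matrix.map_mul, Matrix.transpose_map, blk_map σ (f m) b _ (fun i j g => mc_coeff _ _ _ _ _ _),
        blk_map σ (f m) b' _ (fun i j g => mc_coeff _ _ _ _ _ _)]
    have := row_mul (blk (f m) (mc σ (map_zero _) b'))ᵀ _ D C hC0 (fun i => by simpa using (hD m).2 i) (hC m).1 i
    rw [← e] at this
    simpa using this
  choose c hc using hbd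
  set M : ℝ := 1 + ∑ σ, |c σ| with hMdef
  have hM1 : 1 ≤ M := by
    have : 0 ≤ ∑ σ, |c σ| := Finset.sum_nonneg fun σ _ => abs_nonneg _
    linarith
  have hcM : ∀ σ, c σ ≤ M := by
    intro σ
    have := Finset.single_le_sum (f := fun σ => |c σ|) (fun σ _ => abs_nonneg _) (Finset.mem_univ σ)
    linarith [le_abs_self (c σ)]
  have hrow : ∀ m (σ : E →+* ℂ) i, ∑ j, ‖σ (BE m i j)‖ ≤ M := fun m σ i =>
    (hc σ m i).trans (hcM σ)
  have hevM : ∀ m i, |(hH m).eigenvalues i| ≤ M := by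
    intro m i
    refine eigenvalue_le _ (hH m) M (fun i => ?_) i
    rw [← hBE]
    simpa using hrow m J i
  set d := Module.finrank ℚ E with hd
  have hcard : ∀ m, Fintype.card (Fin n × Fin (k m)) = n * k m := by simp
  have hsm : ∀ m, ∀ ε : ℝ, 0 < ε → ε < 1 →
      ((Finset.univ.filter (fun i => (hH m).eigenvalues i ≠ 0 ∧
        |(hH m).eigenvalues i| < ε)).card : ℝ) * (-Real.log ε)
        ≤ (d * n * Real.log (2 * M) + n * Real.log M) * k m := by
    intro m ε h0 h1
    have hp : ∀ (X : Matrix (Fin n × Fin (k m)) (Fin n × Fin (k m)) ℂ) (hX : X.IsHermitian),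
        (BE m).map J = X → 1 ≤ (∏ i ∈ Finset.univ.filter (fun i => hX.eigenvalues i ≠ 0),
          |hX.eigenvalues i|) * ((2 * M) ^ Fintype.card (Fin n × Fin (k m))) ^ d := by
      rintro X hX rfl
      refine prod_eigenvalues_ge J (BE m) hX (fun i j => ?_) M hM1 (hrow m)
      simp only [BE, Matrix.mul_apply, Matrix.transpose_apply]
      exact IsIntegral.sum _ fun l _ => (blk_integral _ _ hi' _ _).mul (blk_integral _ _ hi _ _)
    have := card_small _ M _ hM1 (hevM m) (by positivity) (hp _ (hH m) (hBE m)) ε h0 h1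
    refine this.trans (le_of_eq ?_)
    rw [Real.log_pow, Real.log_pow, hcard]
    push_cast
    ring
  have key := kernel_conv R a (fun m => Fin n × Fin (k m)) (fun m => (hH m).eigenvalues) k hf.pos
    hcard M (fun m i => (hP m).eigenvalues_nonneg i) (fun m i => (le_abs_self _).trans (hevM m i))
    (fun l => by
      refine (moments hf R a l).congr fun m => ?_
      rw [trace_pow_eigenvalues _ (hH m)]) _ hsm
  refine key.congr fun m => ?_
  have hkm : (k m : ℝ) ≠ 0 := by exact_mod_cast (hf.pos m).ne'
  have e1 : (blk (f m) a).rank =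
      (Finset.univ.filter (fun i => (hH m).eigenvalues i ≠ 0)).card := by
    rw [← Matrix.rank_conjTranspose_mul_self, (hH m).rank_eq_card_non_zero_eigs, Fintype.card_subtype]
  have e2 := Finset.card_filter_add_card_filter_not (s := Finset.univ)
    (fun i => (hH m).eigenvalues i = 0)
  rw [Finset.card_univ, hcard] at e2
  have e3 : ((Finset.univ.filter (fun i => (hH m).eigenvalues i = 0)).card : ℝ) +
      ((Finset.univ.filter (fun i => (hH m).eigenvalues i ≠ 0)).card : ℝ) = n * k m := by
    exact_mod_cast e2
  rw [e1, eq_sub_iff_add_eq, ← add_div, e3, mul_div_cancel_right₀ _ hkm]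

lemma main_conv {k : ℕ → ℕ} {f : ∀ m, Γ → Equiv.Perm (Fin (k m))} (hf : Sof f)
    (R : GNSRep Γ (canonicalTrace Γ)) {n : ℕ} (a : Matrix (Fin n) (Fin n) (MonoidAlgebra ℂ Γ))
    (hi : ∀ i j g, IsIntegral ℤ ((a i j).coeff g)) :
    Tendsto (fun m => (n : ℝ) - ((blk (f m) a).rank : ℝ) / (k m : ℝ)) atTop (𝓝 (R.kerDim a)) := by
  classical
  let S0 : Finset ℂ := Finset.univ.biUnion fun i => Finset.univ.biUnion fun j =>
    (a i j).coeff.support.image fun g => (a i j).coeff g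
  let S : Finset ℂ := S0 ∪ S0.image (starRingEnd ℂ)
  have hiS0 : ∀ z ∈ S0, IsIntegral ℤ z := by
    intro z hz
    simp only [S0, Finset.mem_biUnion, Finset.mem_image, Finset.mem_univ, true_and] at hz
    obtain ⟨i, j, g, -, rfl⟩ := hz
    exact hi i j g
  have hconj : ∀ z : ℂ, IsIntegral ℤ z → IsIntegral ℤ (starRingEnd ℂ z) := fun z hz =>
    map_isIntegral_int (starRingEnd ℂ) hz
  have hiS : ∀ z ∈ S, IsIntegral ℤ z := by
    intro z hz
    rcases Finset.mem_union.1 hz with h | h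
    · exact hiS0 z h
    · obtain ⟨w, hw, rfl⟩ := Finset.mem_image.1 h
      exact hconj _ (hiS0 w hw)
  let E := IntermediateField.adjoin ℚ (S : Set ℂ)
  have : FiniteDimensional ℚ E :=
    IntermediateField.finiteDimensional_adjoin fun z hz => (hiS z hz).tower_top
  have : NumberField E := { to_charZero := inferInstance, to_finiteDimensional := inferInstance }
  have hmem : ∀ z ∈ S, z ∈ E := fun z hz => IntermediateField.subset_adjoin ℚ _ hz
  have hm1 : ∀ i j g, (a i j).coeff g ∈ E := by
    intro i j g
    by_cases h0 : (a i j).coeff g = 0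
    · rw [h0]; exact zero_mem _
    · refine hmem _ (Finset.mem_union_left _ ?_)
      simp only [S0, Finset.mem_biUnion, Finset.mem_image, Finset.mem_univ, true_and]
      exact ⟨i, j, g, Finsupp.mem_support_iff.2 h0, rfl⟩
  have hm2 : ∀ i j g, starRingEnd ℂ ((a i j).coeff g) ∈ E := by
    intro i j g
    by_cases h0 : (a i j).coeff g = 0
    · rw [h0, map_zero]; exact zero_mem _
    · refine hmem _ (Finset.mem_union_right _ (Finset.mem_image_of_mem _ ?_))
      simp only [S0, Finset.mem_biUnion, Finset.mem_image, Finset.mem_univ, true_and]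
      exact ⟨i, j, g, Finsupp.mem_support_iff.2 h0, rfl⟩
  let lift : ℂ → E := fun z => if h : z ∈ E then ⟨z, h⟩ else 0
  have hl : ∀ z ∈ E, algebraMap E ℂ (lift z) = z := by
    intro z hz
    simp only [lift, dif_pos hz]
    rfl
  have hl0 : lift 0 = 0 := by
    apply (algebraMap E ℂ).injective
    rw [hl 0 (zero_mem _), map_zero]
  have hIntg : ∀ z : ℂ, z ∈ E → IsIntegral ℤ z → IsIntegral ℤ (lift z) := by
    intro z hz hzi
    rw [← hl z hz] at hzi
    exact (isIntegral_algHom_iff ((algebraMap E ℂ).toIntAlgHom) (algebraMap E ℂ).injective).1 hzi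
  refine main_conv_E hf R a (algebraMap E ℂ) (mc lift hl0 a)
    (mc (fun z => lift (starRingEnd ℂ z)) (by simp [hl0]) a) ?_ ?_ ?_ ?_
  · intro i j g; rw [mc_coeff, hl _ (hm1 i j g)]
  · intro i j g; rw [mc_coeff, hl _ (hm2 i j g)]
  · intro i j g; rw [mc_coeff]; exact hIntg _ (hm1 i j g) (hi i j g)
  · intro i j g; rw [mc_coeff]; exact hIntg _ (hm2 i j g) (hconj _ (hi i j g))

lemma exists_denom {n : ℕ} (a : Matrix (Fin n) (Fin n) (MonoidAlgebra (AlgebraicClosure ℚ) Γ)) :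
    ∃ D : ℕ, 0 < D ∧ ∀ i j g, IsIntegral ℤ ((D : AlgebraicClosure ℚ) * (a i j).coeff g) := by
  classical
  let S0 : Finset (AlgebraicClosure ℚ) := Finset.univ.biUnion fun i => Finset.univ.biUnion fun j =>
    (a i j).coeff.support.image fun g => (a i j).coeff g
  have key : ∀ S : Finset (AlgebraicClosure ℚ),
      ∃ D : ℕ, 0 < D ∧ ∀ z ∈ S, IsIntegral ℤ ((D : AlgebraicClosure ℚ) * z) := by
    intro S
    induction S using Finset.induction_on with
    | empty => exact ⟨1, one_pos, by simp⟩
    | insert z S hz ih =>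
      obtain ⟨D, hD, h⟩ := ih
      have hq : IsAlgebraic ℚ z := by
        obtain ⟨p, hp, hp0⟩ := (AlgebraicClosure.isAlgebraic ℚ).isAlgebraic z
        refine ⟨p, hp, ?_⟩
        have h1 := (Polynomial.aeval_def z p).symm.trans hp0
        rw [Polynomial.aeval_def]
        refine Eq.trans ?_ h1
        congr 1
      have halg : IsAlgebraic ℤ z :=
        (IsFractionRing.isAlgebraic_iff ℤ ℚ (AlgebraicClosure ℚ)).2
          hq
      obtain ⟨y, hy, hy2⟩ := halg.exists_integral_multiple
      rw [zsmul_eq_mul] at hy2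
      have hy3 : IsIntegral ℤ ((y.natAbs : AlgebraicClosure ℚ) * z) := by
        rcases Int.natAbs_eq y with h1 | h1
        · rw [h1] at hy2
          simpa using hy2
        · rw [h1] at hy2
          simpa using hy2.neg
      have hIntg : ∀ m : ℕ, IsIntegral ℤ (m : AlgebraicClosure ℚ) := fun m => by
        simpa using isIntegral_algebraMap (R := ℤ) (A := AlgebraicClosure ℚ) (x := (m : ℤ))
      refine ⟨D * y.natAbs, Nat.mul_pos hD (Int.natAbs_pos.2 hy), fun w hw => ?_⟩
      rcases Finset.mem_insert.1 hw with rfl | hw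
      · have := (hIntg D).mul hy3
        rw [← mul_assoc] at this
        exact_mod_cast this
      · have := (hIntg y.natAbs).mul (h w hw)
        rw [← mul_assoc, mul_comm (y.natAbs : AlgebraicClosure ℚ)] at this
        exact_mod_cast this
  obtain ⟨D, hD, h⟩ := key S0
  refine ⟨D, hD, fun i j g => ?_⟩
  by_cases h0 : (a i j).coeff g = 0
  · rw [h0, mul_zero]; exact isIntegral_zero
  · apply h
    simp only [S0, Finset.mem_biUnion, Finset.mem_image, Finset.mem_univ, true_and]
    exact ⟨i, j, g, Finsupp.mem_support_iff.2 h0, rfl⟩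

lemma final_conv {k : ℕ → ℕ} {f : ∀ m, Γ → Equiv.Perm (Fin (k m))} (hf : Sof f)
    (R : GNSRep Γ (canonicalTrace Γ)) {n : ℕ}
    (a : Matrix (Fin n) (Fin n) (MonoidAlgebra (AlgebraicClosure ℚ) Γ))
    (D : ℕ) (hD : 0 < D)
    (hi : ∀ i j g, IsIntegral ℤ ((D : AlgebraicClosure ℚ) * (a i j).coeff g))
    (j : AlgebraicClosure ℚ →+* ℂ) :
    Tendsto (fun m => (n : ℝ) - ((blk (f m) (mc (fun z => (D : AlgebraicClosure ℚ) * z)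
      (mul_zero _) a)).rank : ℝ) / (k m : ℝ)) atTop (𝓝 (R.kerDim (mapCoeffs j a))) := by
  have hco : ∀ i i' g, ((mapCoeffs j a) i i').coeff g = j ((a i i').coeff g) := by
    intro i i' g
    simp [mapCoeffs]
  have hco2 : ∀ i i' g, (((((D : ℝ) : ℂ) • mapCoeffs j a) : Matrix (Fin n) (Fin n)
      (MonoidAlgebra ℂ Γ)) i i').coeff g = j ((mc (fun z => (D : AlgebraicClosure ℚ) * z)
      (mul_zero _) a i i').coeff g) := by
    intro i i' g
    rw [mc_coeff, Matrix.smul_apply, MonoidAlgebra.coeff_smul, Finsupp.smul_apply, hco]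
    simp
  rw [← kerDim_smul R (mapCoeffs j a) D (by exact_mod_cast hD)]
  refine (main_conv hf R _ (fun i i' g => ?_)).congr fun m => ?_
  · rw [hco2, mc_coeff]
    exact map_isIntegral_int j (hi i i' g)
  · rw [← blk_map j (f m) _ _ hco2, rank_map_field]

end LA

/-- for a countable sofic group `Γ` and `a ∈ Mₙ(ℚ̄ Γ)`, the von Neumann
dimension (with respect to the canonical trace of `Γ`) of the kernel of `j(a)` is the
same for all field embeddings `j : ℚ̄ → ℂ`. -/
theorem stmt18 {Γ : Type*} [Group Γ] [Countable Γ] (hΓ : IsSofic Γ) (n : ℕ) (hn : 0 < n)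
    (a : Matrix (Fin n) (Fin n) (MonoidAlgebra (AlgebraicClosure ℚ) Γ))
    (j₁ j₂ : AlgebraicClosure ℚ →+* ℂ) :
    ∀ R : GNSRep Γ (canonicalTrace Γ),
      R.kerDim (mapCoeffs j₁ a) = R.kerDim (mapCoeffs j₂ a) := by
  intro R
  obtain ⟨k, f, h1, h2, h3⟩ := hΓ
  have hf : LA.Sof f := ⟨h1, h2, h3⟩
  obtain ⟨D, hD, hi⟩ := LA.exists_denom a
  exact tendsto_nhds_unique (LA.final_conv hf R a D hD hi j₁) (LA.final_conv hf R a D hD hi j₂)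

end
end

section
/- Let q : F_∞ → S_k be a group homomorphism, τ_q the associated permutational trace on F_∞ (τ_q(g) = τ_k(q(g))), and a ∈ M_n(ℚ̄F_∞). Then for every field embedding j : ℚ̄ → ℂ, dim_{τ_q}(ker j(a)) = (1/k)·dim_{ℚ̄} ker((α_k∘q)(a)), where (α_k∘q)(a) ∈ M_{kn}(ℚ̄) is obtained by applying q and the permutation-matrix representation α_k to each entry of a. In particular dim_{τ_q}(ker j(a)) does not depend on the embedding j. -/
open scoped ComplexOrder ENNReal
open Filter Topology Matrix

set_option synthInstance.maxHeartbeats 1000000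
set_option maxHeartbeats 1000000

noncomputable section

/-- A permutational trace on `G`: a function of the form `g ↦ τ_k(π g)` for some `k ≥ 1`
and some group homomorphism `π : G → S_k`. -/
def IsPermutationalTrace {G : Type*} [Group G] (ψ : G → ℂ) : Prop :=
  ∃ (k : ℕ) (_ : 0 < k) (π : G →* Equiv.Perm (Fin k)),
    ψ = fun g => (permFixRatio (π g) : ℂ)

/-- The `kn × kn` matrix over `ℚ̄` obtained from `a ∈ Mₙ(ℚ̄ F_∞)` by applying `q` and the
permutation-matrix representation `α_k` to each entry. -/
def permMatRepOf {k n : ℕ} (q : FreeGroup ℕ →* Equiv.Perm (Fin k))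
    (a : Matrix (Fin n) (Fin n) (MonoidAlgebra (AlgebraicClosure ℚ) (FreeGroup ℕ))) :
    Matrix (Fin n × Fin k) (Fin n × Fin k) (AlgebraicClosure ℚ) :=
  Matrix.of fun p r => (a p.1 r.1).coeff.sum fun g c => if q g r.2 = p.2 then c else 0


section helpers

theorem rank_map_field {K L : Type*} [Field K] [Field L] {m : Type*} [Fintype m] [DecidableEq m]
    (j : K →+* L) (A : Matrix m m K) : (A.map j).rank = A.rank := by
  classical
  obtain ⟨P, Q, D, h⟩ := Matrix.Pivot.exists_list_transvec_mul_diagonal_mul_list_transvec A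
  set U := (P.map TransvectionStruct.toMatrix).prod with hU
  set V := (Q.map TransvectionStruct.toMatrix).prod with hV
  have hU1 : U.det = 1 := by rw [hU]; exact TransvectionStruct.det_toMatrix_prod P
  have hV1 : V.det = 1 := by rw [hV]; exact TransvectionStruct.det_toMatrix_prod Q
  have hU2 : (U.map j).det = 1 := by
    have := j.map_det U
    rw [hU1, map_one] at this
    exact this.symm
  have hV2 : (V.map j).det = 1 := by
    have := j.map_det V
    rw [hV1, map_one] at this
    exact this.symm
  rw [h, Matrix.map_mul, Matrix.map_mul, rank_mul_eq_left_of_isUnit_det _ _ (by simp [hV2]),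
    rank_mul_eq_right_of_isUnit_det _ _ (by simp [hU2]),
    rank_mul_eq_left_of_isUnit_det _ _ (by simp [hV1]),
    rank_mul_eq_right_of_isUnit_det _ _ (by simp [hU1]), Matrix.diagonal_map (map_zero j),
    rank_diagonal, rank_diagonal]
  simp

/-- permutation matrices -/
def permM (k : ℕ) : Equiv.Perm (Fin k) →* Matrix (Fin k) (Fin k) ℂ where
  toFun σ := Matrix.of fun p r => if σ r = p then 1 else 0
  map_one' := by
    ext p r
    simp [Matrix.one_apply, eq_comm]
  map_mul' σ τ := by
    ext p r
    simp [Matrix.mul_apply]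
    congr

theorem permM_trace {k : ℕ} (σ : Equiv.Perm (Fin k)) :
    (permM k σ).trace = ((Finset.univ.filter fun x => σ x = x).card : ℂ) := by
  simp [permM, Matrix.trace]

theorem permM_star {k : ℕ} (σ : Equiv.Perm (Fin k)) :
    (permM k σ)ᴴ = permM k σ⁻¹ := by
  ext p r
  simp only [permM, MonoidHom.coe_mk, OneHom.coe_mk, Matrix.conjTranspose_apply, Matrix.of_apply,
    Equiv.Perm.inv_eq_iff_eq]
  by_cases h : σ p = r
  · simp [h]
  · rw [if_neg h, if_neg (fun h' => h h'.symm)]; simp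

variable {k n : ℕ}

abbrev FG := FreeGroup ℕ

/-- linear extension of the permutation representation -/
def alph (q : FG →* Equiv.Perm (Fin k)) :
    MonoidAlgebra ℂ FG →ₐ[ℂ] Matrix (Fin k) (Fin k) ℂ :=
  MonoidAlgebra.lift ℂ _ _ ((permM k).comp q)

theorem alph_of (q : FG →* Equiv.Perm (Fin k)) (g : FG) :
    alph q (MonoidAlgebra.of ℂ FG g) = permM k (q g) := by
  rw [alph, MonoidAlgebra.lift_of]; rfl

/-- matrix amplification -/
def alphN (n : ℕ) (q : FG →* Equiv.Perm (Fin k)) :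
    Matrix (Fin n) (Fin n) (MonoidAlgebra ℂ FG) →ₐ[ℂ]
      Matrix (Fin n × Fin k) (Fin n × Fin k) ℂ :=
  (Matrix.compAlgEquiv (Fin n) (Fin k) ℂ ℂ).toAlgHom.comp (alph q).mapMatrix

theorem alphN_apply (q : FG →* Equiv.Perm (Fin k))
    (c : Matrix (Fin n) (Fin n) (MonoidAlgebra ℂ FG)) (p r : Fin n × Fin k) :
    alphN n q c p r = alph q (c p.1 r.1) p.2 r.2 := rfl

theorem alphN_mapCoeffs (q : FG →* Equiv.Perm (Fin k)) (j : AlgebraicClosure ℚ →+* ℂ)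
    (a : Matrix (Fin n) (Fin n) (MonoidAlgebra (AlgebraicClosure ℚ) FG)) :
    alphN n q (mapCoeffs j a) = (permMatRepOf q a).map j := by
  ext p r
  rw [alphN_apply, alph, MonoidAlgebra.lift_apply, mapCoeffs, permMatRepOf]
  simp only [Matrix.map_apply, Matrix.of_apply, MonoidAlgebra.coeff_ofCoeff]
  rw [Finsupp.sum_mapRange_index (by simp), Finsupp.sum, Finsupp.sum, map_sum, Matrix.sum_apply]
  refine Finset.sum_congr rfl fun g _ => ?_
  simp [permM, apply_ite j]

variable {q : FG →* Equiv.Perm (Fin k)}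
  (R : GNSRep FG (fun g => (permFixRatio (q g) : ℂ)))

theorem inner_pi (x : MonoidAlgebra ℂ FG) :
    (inner ℂ R.ξ (R.π x R.ξ) : ℂ) = (alph q x).trace / k := by
  induction x using MonoidAlgebra.induction_on with
  | of g => rw [R.inner_eq, alph_of, permM_trace, permFixRatio]; push_cast; rfl
  | add x y hx hy => simp [inner_add_right, hx, hy, add_div]
  | smul r x hx => simp [inner_smul_right, hx, mul_div_assoc]

theorem exists_star (x : MonoidAlgebra ℂ FG) :
    ∃ y, R.π y = star (R.π x) ∧ alph q y = (alph q x)ᴴ := by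
  induction x using MonoidAlgebra.induction_on with
  | of g =>
    exact ⟨MonoidAlgebra.of ℂ FG g⁻¹, (R.star_of g).symm, by
      rw [alph_of, alph_of, permM_star, map_inv]⟩
  | add x y hx hy =>
    obtain ⟨x', h1, h2⟩ := hx
    obtain ⟨y', h3, h4⟩ := hy
    exact ⟨x' + y', by simp [h1, h3], by simp [h2, h4]⟩
  | smul r x hx =>
    obtain ⟨x', h1, h2⟩ := hx
    exact ⟨star r • x', by rw [map_smul, map_smul, star_smul, h1], by
      rw [map_smul, map_smul, Matrix.conjTranspose_smul, h2]⟩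

theorem pi_eq_zero (x : MonoidAlgebra ℂ FG) (hx : alph q x = 0) : R.π x = 0 := by
  have key : ∀ y z, (inner ℂ (R.π y R.ξ) (R.π x (R.π z R.ξ)) : ℂ) = 0 := by
    intro y z
    obtain ⟨y', h1, h2⟩ := exists_star R y
    have := inner_pi R (y' * (x * z))
    rw [map_mul (alph q), map_mul (alph q), hx] at this
    simp only [zero_mul, mul_zero, Matrix.trace_zero, zero_div, map_mul, h1] at this
    rw [← this]
    simp only [ContinuousLinearMap.mul_apply, ContinuousLinearMap.star_eq_adjoint,
      ContinuousLinearMap.adjoint_inner_right]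
  have key2 : ∀ z, R.π x (R.π z R.ξ) = 0 := by
    intro z
    refine R.cyclic.eq_zero_of_inner_right (𝕜 := ℂ) ?_
    rintro v ⟨y, rfl⟩
    exact key y z
  ext v
  have := Continuous.ext_on R.cyclic (f := R.π x) (g := fun _ => 0) (R.π x).continuous
    continuous_const (by rintro _ ⟨z, rfl⟩; simpa using key2 z)
  exact congrFun this v

theorem matAct_apply (b : Matrix (Fin n) (Fin n) (MonoidAlgebra ℂ FG))
    (v : PiLp 2 (fun _ : Fin n => R.H)) (i : Fin n) :
    matAct R.π b v i = ∑ l, R.π (b i l) (v l) := by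
  simp [matAct]

/-- `matAct` as an algebra morphism -/
def matHom (n : ℕ) : Matrix (Fin n) (Fin n) (MonoidAlgebra ℂ FG) →ₐ[ℂ]
    (PiLp 2 (fun _ : Fin n => R.H) →L[ℂ] PiLp 2 (fun _ : Fin n => R.H)) :=
  AlgHom.ofLinearMap
    { toFun := matAct R.π
      map_add' := fun x y => by
        ext v i
        simp [matAct_apply, Finset.sum_add_distrib]
      map_smul' := fun r x => by
        ext v i
        simp [matAct_apply, Finset.smul_sum] }
    (by
      ext v i
      simp only [LinearMap.coe_mk, AddHom.coe_mk, matAct_apply]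
      rw [Finset.sum_eq_single i]
      · simp
      · intro l _ hl
        simp [Matrix.one_apply_ne hl.symm]
      · simp)
    (by
      intro x y
      ext v i
      simp only [LinearMap.coe_mk, AddHom.coe_mk, matAct_apply, ContinuousLinearMap.mul_apply,
        Matrix.mul_apply, map_sum, map_mul, ContinuousLinearMap.sum_apply]
      rw [Finset.sum_comm])

theorem matHom_apply (b : Matrix (Fin n) (Fin n) (MonoidAlgebra ℂ FG)) :
    matHom R n b = matAct R.π b := rfl

theorem matHom_eq_zero (b : Matrix (Fin n) (Fin n) (MonoidAlgebra ℂ FG))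
    (hb : alphN n q b = 0) : matHom R n b = 0 := by
  rw [matHom_apply]
  ext v i
  rw [matAct_apply]
  refine (Finset.sum_eq_zero fun l _ => ?_).trans rfl
  rw [pi_eq_zero R (b i l)]
  · rfl
  · ext p r
    exact congrFun (congrFun hb (i, p)) (l, r)

theorem sum_inner_vec (b : Matrix (Fin n) (Fin n) (MonoidAlgebra ℂ FG)) :
    (∑ i, (inner ℂ (R.vec i) (matHom R n b (R.vec i)) : ℂ)) = (alphN n q b).trace / k := by
  have h : ∀ i : Fin n, (inner ℂ (R.vec i) (matHom R n b (R.vec i)) : ℂ)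
      = (alph q (b i i)).trace / k := by
    intro i
    rw [← inner_pi R, matHom_apply, PiLp.inner_apply, Finset.sum_eq_single i]
    · rw [matAct_apply, Finset.sum_eq_single i]
      · simp [GNSRep.vec]
      · intro l _ hl
        simp [GNSRep.vec, hl]
      · simp
    · intro l _ hl
      simp [GNSRep.vec, hl]
    · simp
  simp_rw [h]
  rw [← Finset.sum_div]
  simp only [Matrix.trace, Matrix.diag, alphN_apply, Fintype.sum_prod_type]

theorem exists_starN (a : Matrix (Fin n) (Fin n) (MonoidAlgebra ℂ FG)) :
    ∃ b, matHom R n b = star (matHom R n a) ∧ alphN n q b = (alphN n q a)ᴴ := by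
  choose f h1 h2 using exists_star R
  refine ⟨Matrix.of fun i l => f (a l i), ?_, ?_⟩
  · rw [ContinuousLinearMap.star_eq_adjoint, ContinuousLinearMap.eq_adjoint_iff]
    intro v w
    simp only [PiLp.inner_apply, matHom_apply, matAct_apply, Matrix.of_apply, h1,
      inner_sum, ContinuousLinearMap.star_eq_adjoint, sum_inner,
      ContinuousLinearMap.adjoint_inner_left]
    rw [Finset.sum_comm]
  · ext p r
    simp only [alphN_apply, Matrix.of_apply, h2, Matrix.conjTranspose_apply]

theorem trace_aeval {m : Type*} [Fintype m] [DecidableEq m] {N : Matrix m m ℂ}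
    (hN : N.IsHermitian) (p : Polynomial ℝ) :
    Polynomial.aeval N p = hN.cfc p.eval := by
  have hs : IsSelfAdjoint N := hN
  rw [← cfc_polynomial p N hs, hN.cfc_eq]

theorem trace_hcfc {m : Type*} [Fintype m] [DecidableEq m] {N : Matrix m m ℂ}
    (hN : N.IsHermitian) (f : ℝ → ℝ) :
    (hN.cfc f).trace = ((∑ i, f (hN.eigenvalues i) : ℝ) : ℂ) := by
  rw [Matrix.IsHermitian.cfc, Unitary.conjStarAlgAut_apply, Matrix.trace_mul_comm, ← mul_assoc]
  simp [Matrix.trace]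

theorem main_formula (a : Matrix (Fin n) (Fin n) (MonoidAlgebra ℂ FG))
    (hN : ((alphN n q a)ᴴ * alphN n q a).IsHermitian)
    (h : ℝ → ℝ) :
    (∑ i, (inner ℂ (R.vec i) (cfc h (cfcAbs (matAct R.π a)) (R.vec i)) : ℂ)).re
      = (∑ i, h (Real.sqrt (hN.eigenvalues i))) / k := by
  obtain ⟨b', h1, h2⟩ := exists_starN R a
  set T := star (matHom R n a) * matHom R n a with hT
  have hTb : matHom R n (b' * a) = T := by rw [map_mul, h1]
  have hNb : alphN n q (b' * a) = (alphN n q a)ᴴ * alphN n q a := by rw [map_mul, h2]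
  have hTsa : IsSelfAdjoint T := IsSelfAdjoint.star_mul_self _
  have haT : ∀ p : Polynomial ℝ, Polynomial.aeval T p
      = matHom R n (Polynomial.aeval (b' * a) p) := by
    intro p
    rw [← hTb]
    exact (Polynomial.aeval_algHom_apply ((matHom R n).restrictScalars ℝ) _ p)
  have haN : ∀ p : Polynomial ℝ, alphN n q (Polynomial.aeval (b' * a) p) = hN.cfc p.eval := by
    intro p
    rw [← trace_aeval, ← hNb]
    exact (Polynomial.aeval_algHom_apply ((alphN n q).restrictScalars ℝ) _ p).symm
  have hspec : ∀ t ∈ spectrum ℝ T, ∃ i, t = hN.eigenvalues i := by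
    intro t ht
    set P : Polynomial ℝ := ∏ i, (Polynomial.X - Polynomial.C (hN.eigenvalues i)) with hP
    have hPT : Polynomial.aeval T P = 0 := by
      rw [haT]
      apply matHom_eq_zero
      rw [haN, Matrix.IsHermitian.cfc]
      have : (RCLike.ofReal ∘ (fun x => P.eval x) ∘ hN.eigenvalues : _ → ℂ) = 0 := by
        ext i
        have : P.eval (hN.eigenvalues i) = 0 := by
          rw [hP, Polynomial.eval_prod]
          exact Finset.prod_eq_zero (Finset.mem_univ i) (by simp)
        simp [this]
      rw [this]
      simp
    have h3 := spectrum.subset_polynomial_aeval T P ⟨t, ht, rfl⟩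
    rw [hPT] at h3
    have h4 : P.eval t = 0 := by
      by_contra hne
      rw [spectrum.mem_iff, sub_zero] at h3
      exact h3 ((IsUnit.mk0 _ hne).map (algebraMap ℝ _))
    rw [hP, Polynomial.eval_prod, Finset.prod_eq_zero_iff] at h4
    obtain ⟨i, _, hi⟩ := h4
    exact ⟨i, by simpa [sub_eq_zero] using hi⟩
  have hfin : (spectrum ℝ T).Finite :=
    (Set.finite_range hN.eigenvalues).subset fun t ht => by
      obtain ⟨i, hi⟩ := hspec t ht
      exact ⟨i, hi.symm⟩
  set S : Finset ℝ := Finset.univ.image hN.eigenvalues with hS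
  set p : Polynomial ℝ := Lagrange.interpolate S id (fun t => h (Real.sqrt t)) with hp
  have hpe : ∀ i, p.eval (hN.eigenvalues i) = h (Real.sqrt (hN.eigenvalues i)) := by
    intro i
    exact Lagrange.eval_interpolate_at_node (s := S) (v := id) (fun t => h (Real.sqrt t))
      (Function.injective_id.injOn) (Finset.mem_image_of_mem _ (Finset.mem_univ i))
  have hc : cfc h (cfcAbs (matAct R.π a)) = matHom R n (Polynomial.aeval (b' * a) p) := by
    have e1 : cfcAbs (matAct R.π a) = cfc Real.sqrt T := rfl
    rw [e1, ← cfc_comp h Real.sqrt T hTsa ((hfin.image _).continuousOn h)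
      (Real.continuous_sqrt.continuousOn), ← haT, ← cfc_polynomial p T hTsa]
    apply cfc_congr
    intro t ht
    obtain ⟨i, rfl⟩ := hspec t ht
    exact (hpe i).symm
  rw [hc, sum_inner_vec, haN, trace_hcfc]
  simp_rw [hpe]
  rw [← Complex.ofReal_natCast, ← Complex.ofReal_div, Complex.ofReal_re]

theorem kerDim_eq (hk : 0 < k) (a : Matrix (Fin n) (Fin n) (MonoidAlgebra ℂ FG)) :
    R.kerDim a = ((n * k - (alphN n q a).rank : ℝ)) / k := by
  have hN : ((alphN n q a)ᴴ * alphN n q a).IsHermitian :=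
    Matrix.isHermitian_conjTranspose_mul_self _
  have hpos : ∀ i, 0 ≤ hN.eigenvalues i :=
    (Matrix.posSemidef_conjTranspose_mul_self (alphN n q a)).eigenvalues_nonneg
  have hk' : (0:ℝ) < k := by exact_mod_cast hk
  have hrank : (n * k - (alphN n q a).rank : ℝ)
      = ∑ i, if hN.eigenvalues i = 0 then (1:ℝ) else 0 := by
    rw [← Matrix.rank_conjTranspose_mul_self, hN.rank_eq_card_non_zero_eigs,
      Fintype.card_subtype, Finset.sum_boole, sub_eq_iff_eq_add]
    have := Finset.card_filter_add_card_filter_not (s := Finset.univ)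
      (fun i => hN.eigenvalues i = 0)
    rw [Finset.card_univ, Fintype.card_prod, Fintype.card_fin, Fintype.card_fin] at this
    exact_mod_cast this.symm
  rw [hrank]
  apply IsLeast.csInf_eq
  constructor
  · let P : ℝ → ℝ := fun t => ∏ i, if hN.eigenvalues i = 0 then 1
      else (1 - t / Real.sqrt (hN.eigenvalues i))
    have hPc : Continuous P := by
      refine continuous_finset_prod _ fun i _ => ?_
      split_ifs
      · exact continuous_const
      · fun_prop
    have hP0 : P 0 = 1 := Finset.prod_eq_one fun i _ => by simp
    refine ⟨fun t => min 1 |P t|, ?_, ?_, ?_, ?_⟩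
    · exact (continuous_const.min hPc.abs).continuousOn
    · intro t _
      exact ⟨le_min zero_le_one (abs_nonneg _), min_le_left _ _⟩
    · simp [hP0]
    · rw [main_formula R a hN]
      congr 1
      refine Finset.sum_congr rfl fun i _ => ?_
      split_ifs with h0
      · simp [h0, hP0]
      · have : P (Real.sqrt (hN.eigenvalues i)) = 0 := by
          refine Finset.prod_eq_zero (Finset.mem_univ i) ?_
          rw [if_neg h0, div_self, sub_self]
          exact (Real.sqrt_pos.2 (lt_of_le_of_ne (hpos i) (Ne.symm h0))).ne'
        simp [this]
  · rintro r ⟨h, _, h01, h0, rfl⟩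
    rw [main_formula R a hN]
    gcongr with i _
    split_ifs with h2
    · simp [h2, h0]
    · exact (h01 _ (Real.sqrt_nonneg _)).1

end helpers

/-- for a homomorphism `q : F_∞ → S_k`, the associated permutational trace
`τ_q` and `a ∈ Mₙ(ℚ̄ F_∞)`, for every field embedding `j : ℚ̄ → ℂ` one has
`dim_{τ_q}(ker j(a)) = (1/k)·dim_ℚ̄ ker((α_k ∘ q)(a))`; in particular this dimension does
not depend on `j`. -/
theorem stmt19 (k n : ℕ) (hk : 0 < k) (hn : 0 < n)
    (q : FreeGroup ℕ →* Equiv.Perm (Fin k))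
    (a : Matrix (Fin n) (Fin n) (MonoidAlgebra (AlgebraicClosure ℚ) (FreeGroup ℕ))) :
    (∀ (j : AlgebraicClosure ℚ →+* ℂ)
      (R : GNSRep (FreeGroup ℕ) (fun g => (permFixRatio (q g) : ℂ))),
        R.kerDim (mapCoeffs j a) =
          (Module.finrank (AlgebraicClosure ℚ)
            (LinearMap.ker (Matrix.toLin' (permMatRepOf q a))) : ℝ) / k) ∧
    (∀ (j₁ j₂ : AlgebraicClosure ℚ →+* ℂ)
      (R : GNSRep (FreeGroup ℕ) (fun g => (permFixRatio (q g) : ℂ))),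
        R.kerDim (mapCoeffs j₁ a) = R.kerDim (mapCoeffs j₂ a)) := by
  have key : ∀ (j : AlgebraicClosure ℚ →+* ℂ)
      (R : GNSRep (FreeGroup ℕ) (fun g => (permFixRatio (q g) : ℂ))),
        R.kerDim (mapCoeffs j a) =
          (Module.finrank (AlgebraicClosure ℚ)
            (LinearMap.ker (Matrix.toLin' (permMatRepOf q a))) : ℝ) / k := by
    intro j R
    rw [kerDim_eq R hk, alphN_mapCoeffs, rank_map_field]
    congr 1
    have h1 : (permMatRepOf q a).rank
        + Module.finrank (AlgebraicClosure ℚ) (LinearMap.ker (Matrix.toLin' (permMatRepOf q a)))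
        = Module.finrank (AlgebraicClosure ℚ) (Fin n × Fin k → AlgebraicClosure ℚ) :=
      LinearMap.finrank_range_add_finrank_ker (Matrix.toLin' (permMatRepOf q a))
    rw [Module.finrank_fintype_fun_eq_card, Fintype.card_prod, Fintype.card_fin,
      Fintype.card_fin] at h1
    rw [sub_eq_iff_eq_add']
    exact_mod_cast h1.symm
  exact ⟨key, fun j₁ j₂ R => by rw [key j₁ R, key j₂ R]⟩

end
end
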